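/- arXiv:2201.00984 — 3 statements merged into one kernel-verified Lean document; each statement's English description precedes it below -/
import Mathlib

section
/- Let (R, m, k) be a reduced Gorenstein (i.e., R has finite injective dimension as an R-module) commutative Noetherian local ring of Krull dimension 1 which is not an integral domain, and assume R has minimal multiplicity in the sense that m² = xm for some R-regular element x ∈ m. Let S ⊊ Min(R) be a non-empty proper subset, and set I = ∩_{p ∈ S} p and J = ∩_{q ∈ Min(R)∖S} q. Then Tor_1^R(R/I, R/J) = 0 while Tor_2^R(R/I, R/J) ≠ 0; in particular, neither R/I nor R/J is Tor-rigid. -/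
open CategoryTheory IsLocalRing

section Prelim

variable (R : Type) [CommRing R]

/-- `Tor_i^R(M, N) = 0`. -/
noncomputable def TorVanish (M N : Type) [AddCommGroup M] [Module R M]
    [AddCommGroup N] [Module R N] (i : ℕ) : Prop :=
  Subsingleton (((Tor (ModuleCat R) i).obj (ModuleCat.of R M)).obj (ModuleCat.of R N))

/-- `Ext_R^i(M, N) = 0`. -/
noncomputable def ExtVanish (M N : Type) [AddCommGroup M] [Module R M]
    [AddCommGroup N] [Module R N] (i : ℕ) : Prop :=
  Subsingleton (((Ext R (ModuleCat R) i).obj (Opposite.op (ModuleCat.of R M))).obj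
    (ModuleCat.of R N))

/-- `pd_R M < n`, expressed by the standard characterization
`Ext_R^i(M, -) = 0` for all `i ≥ n`. -/
def ProjDimLT (M : Type) [AddCommGroup M] [Module R M] (n : ℕ) : Prop :=
  ∀ (N : ModuleCat R) (i : ℕ), n ≤ i → ExtVanish R M N i

/-- `pd_R M < ∞`. -/
def ProjDimFinite (M : Type) [AddCommGroup M] [Module R M] : Prop :=
  ∃ n, ProjDimLT R M n

/-- `id_R M < n`, expressed by the standard characterization
`Ext_R^i(-, M) = 0` for all `i ≥ n`. -/
def InjDimLT (M : Type) [AddCommGroup M] [Module R M] (n : ℕ) : Prop :=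
  ∀ (N : ModuleCat R) (i : ℕ), n ≤ i → ExtVanish R N M i

/-- `id_R M < ∞`. -/
def InjDimFinite (M : Type) [AddCommGroup M] [Module R M] : Prop :=
  ∃ n, InjDimLT R M n

/-- `M` is a Tor-rigid `R`-module. -/
def TorRigid (M : Type) [AddCommGroup M] [Module R M] : Prop :=
  ∀ (N : ModuleCat R), Module.Finite R N → ∀ n : ℕ, 1 ≤ n → TorVanish R M N n →
    ∀ i : ℕ, n ≤ i → TorVanish R M N i

variable [IsLocalRing R]

/-- The depth of `M`: the supremum of lengths of `M`-regular sequences contained in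
the maximal ideal. -/
noncomputable def depth (M : Type) [AddCommGroup M] [Module R M] : ℕ∞ :=
  sSup {n : ℕ∞ | ∃ rs : List R, (∀ x ∈ rs, x ∈ maximalIdeal R) ∧
    RingTheory.Sequence.IsRegular M rs ∧ (rs.length : ℕ∞) = n}

/-- The dimension of a module, i.e. the Krull dimension of `R ⧸ ann M`. -/
noncomputable def moduleDim (M : Type) [AddCommGroup M] [Module R M] : WithBot ℕ∞ :=
  ringKrullDim (R ⧸ Module.annihilator R M)

/-- `M` is an Ulrich `R`-module of dimension `s` : `M` is nonzero, Cohen–Macaulay of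
dimension `s`, and there is an `M`-regular sequence `x₁, …, x_s` in the maximal ideal
with `mM = (x₁, …, x_s)M`. -/
def IsUlrich (M : Type) [AddCommGroup M] [Module R M] (s : ℕ) : Prop :=
  Nontrivial M ∧ moduleDim R M = (s : ℕ∞) ∧ depth R M = (s : ℕ∞) ∧
  ∃ rs : List R, rs.length = s ∧ (∀ x ∈ rs, x ∈ maximalIdeal R) ∧
    RingTheory.Sequence.IsRegular M rs ∧
    (maximalIdeal R) • (⊤ : Submodule R M) = (Ideal.ofList rs) • ⊤

/-- `R` is a regular local ring: the maximal ideal is generated by `dim R` elements. -/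
def IsRegularLocal : Prop :=
  ∃ s : Finset R, Ideal.span (s : Set R) = maximalIdeal R ∧
    (s.card : WithBot ℕ∞) = ringKrullDim R

/-- `R` (of dimension `d`) has minimal multiplicity: there is an `R`-regular sequence
`x₁, …, x_d` in the maximal ideal `m` with `m² = (x₁, …, x_d)m`. -/
def HasMinimalMultiplicity (d : ℕ) : Prop :=
  ∃ rs : List R, rs.length = d ∧ (∀ x ∈ rs, x ∈ maximalIdeal R) ∧
    RingTheory.Sequence.IsWeaklyRegular R rs ∧
    maximalIdeal R ^ 2 = Ideal.ofList rs * maximalIdeal R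

/-- The `n`-th Betti number of `M` over the local ring `R`, i.e. the dimension over the
residue field `k = R ⧸ m` of `Tor_n^R(M, k)` (which is an `m`-torsion module, so we take
the dimension of its reduction mod `m`). -/
noncomputable def betti (M : Type) [AddCommGroup M] [Module R M] (n : ℕ) : ℕ :=
  Module.finrank (R ⧸ maximalIdeal R)
    ((((Tor (ModuleCat R) n).obj (ModuleCat.of R M)).obj
        (ModuleCat.of R (R ⧸ maximalIdeal R))) ⧸
      (maximalIdeal R • (⊤ : Submodule R
        (((Tor (ModuleCat R) n).obj (ModuleCat.of R M)).obj
          (ModuleCat.of R (R ⧸ maximalIdeal R))))))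

end Prelim

/-!
Since `I ∩ J = 0`, the module `Tor₁(R/I, R/J) = (I ∩ J)/IJ` vanishes. Shifting dimensions,
`Tor₂(R/I, R/J) = Tor₁(R/I, J)` is the kernel of `I ⊗ J → J`; that map has image `IJ = 0`, so
`Tor₂(R/I, R/J) = I ⊗ J`, which is nonzero by Nakayama's lemma because `I` and `J` are nonzero and
finitely generated over a local ring. They are nonzero because a minimal prime containing a finite
intersection of minimal primes is one of them. Exchanging `I` and `J` treats `R/J`.
-/

open TensorProduct

section SplicedResolution

universe u v

variable {C : Type u} [Category.{v} C] [Abelian C]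

/-- The augmentation `P₀ ⟶ Z` of a projective resolution `P` of `Z`. It is `P.π.f 0`, retyped so
that its target is `Z` itself rather than the degree-zero term of a complex. -/
noncomputable def augmentation {Z : C} (P : ProjectiveResolution Z) : P.complex.X 0 ⟶ Z :=
  P.π.f 0

lemma d_comp_augmentation {Z : C} (P : ProjectiveResolution Z) :
    P.complex.d 1 0 ≫ augmentation P = 0 :=
  P.complex_d_comp_π_f_zero

lemma exact_d_augmentation {Z : C} (P : ProjectiveResolution Z) :
    (ShortComplex.mk _ _ (d_comp_augmentation P)).Exact :=
  P.exact₀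

instance epi_augmentation {Z : C} (P : ProjectiveResolution Z) : Epi (augmentation P) :=
  inferInstanceAs (Epi (P.π.f 0))

/-- The complex `⋯ ⟶ P₁ ⟶ P₀ ⟶ Y`, with `Y` in degree `0`, obtained from a projective resolution
`P` of `X` by composing its augmentation with `f : X ⟶ Y`. -/
noncomputable def splicedComplex {X Y : C} (P : ProjectiveResolution X) (f : X ⟶ Y) :
    ChainComplex C ℕ :=
  P.complex.augment (augmentation P ≫ f) (by
    rw [← Category.assoc, d_comp_augmentation, Limits.zero_comp])

lemma exactAt_succ_splicedComplex {X Y : C} (P : ProjectiveResolution X) (f : X ⟶ Y) [Mono f]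
    (n : ℕ) : (splicedComplex P f).ExactAt (n + 1) := by
  cases n with
  | zero =>
    rw [HomologicalComplex.exactAt_iff' _ 2 1 0 (by simp) (by simp)]
    let φ : ShortComplex.mk _ _ (d_comp_augmentation P) ⟶ (splicedComplex P f).sc' 2 1 0 :=
      { τ₁ := 𝟙 (P.complex.X 1)
        τ₂ := 𝟙 (P.complex.X 0)
        τ₃ := f
        comm₁₂ := (Category.id_comp _).trans (Category.comp_id _).symm
        comm₂₃ := Category.id_comp (augmentation P ≫ f) }
    have : Epi φ.τ₁ := inferInstanceAs (Epi (𝟙 (P.complex.X 1)))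
    have : IsIso φ.τ₂ := inferInstanceAs (IsIso (𝟙 (P.complex.X 0)))
    have : Mono φ.τ₃ := inferInstanceAs (Mono f)
    exact (ShortComplex.exact_iff_of_epi_of_isIso_of_mono φ).1 (exact_d_augmentation P)
  | succ n =>
    rw [HomologicalComplex.exactAt_iff' _ (n + 3) (n + 2) (n + 1) (by simp) (by simp)]
    exact P.exact_succ n

lemma splicedComplex_d_comp {S : ShortComplex C} (P : ProjectiveResolution S.X₁) :
    (splicedComplex P S.f).d 1 0 ≫ S.g = 0 :=
  (Category.assoc (augmentation P) S.f S.g).trans <|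
    (congrArg (augmentation P ≫ ·) S.zero).trans Limits.comp_zero

lemma exact_splicedComplex_d {S : ShortComplex C} (hS : S.Exact) (P : ProjectiveResolution S.X₁) :
    (ShortComplex.mk _ _ (splicedComplex_d_comp P)).Exact :=
  let φ : ShortComplex.mk _ _ (splicedComplex_d_comp P) ⟶ S :=
    { τ₁ := augmentation P
      τ₂ := 𝟙 S.X₂
      τ₃ := 𝟙 S.X₃
      comm₁₂ := (Category.comp_id _).symm
      comm₂₃ := (Category.id_comp S.g).trans (Category.comp_id S.g).symm }
  have : Epi φ.τ₁ := epi_augmentation P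
  have : IsIso φ.τ₂ := inferInstanceAs (IsIso (𝟙 S.X₂))
  have : Mono φ.τ₃ := inferInstanceAs (Mono (𝟙 S.X₃))
  (ShortComplex.exact_iff_of_epi_of_isIso_of_mono φ).2 hS

lemma quasiIso_toSingle₀Equiv_symm {K : ChainComplex C ℕ} {Z : C} {g : K.X 0 ⟶ Z}
    {hg : K.d 1 0 ≫ g = 0} (hzero : (ShortComplex.mk _ _ hg).Exact) (hepi : Epi g)
    (hsucc : ∀ n, K.ExactAt (n + 1)) :
    QuasiIso ((ChainComplex.toSingle₀Equiv K Z).symm ⟨g, hg⟩) where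
  quasiIsoAt
    | 0 => by
      let π : K ⟶ (ChainComplex.single₀ C).obj Z := (ChainComplex.toSingle₀Equiv K Z).symm ⟨g, hg⟩
      have hπ : π.f 0 = g := ChainComplex.toSingle₀Equiv_symm_apply_f_zero g hg
      rw [ChainComplex.quasiIsoAt₀_iff,
        ShortComplex.quasiIso_iff_of_zeros' _ (K.shape 0 0 (by simp)) rfl rfl]
      refine (ShortComplex.exact_and_epi_g_iff_of_iso ?_).2 ⟨hzero, hepi⟩
      exact ShortComplex.isoMk (Iso.refl _) (Iso.refl _) (Iso.refl _)
        ((Category.id_comp _).trans (Category.comp_id _).symm)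
        ((Category.id_comp g).trans (hπ.symm.trans (Category.comp_id (π.f 0)).symm))
    | n + 1 => by
      rw [quasiIsoAt_iff_exactAt' _ _ (ChainComplex.exactAt_succ_single_obj _ _)]
      exact hsucc n

/-- The projective resolution of the cokernel term of a short exact sequence with projective middle
term, obtained by splicing that sequence with a projective resolution of its kernel term. -/
noncomputable def splicedResolution {S : ShortComplex C} (hS : S.ShortExact)
    [hproj : Projective S.X₂] (P : ProjectiveResolution S.X₁) : ProjectiveResolution S.X₃ where
  complex := splicedComplex P S.f
  projective
    | 0 => hproj
    | n + 1 => P.projective n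
  π := (ChainComplex.toSingle₀Equiv _ _).symm ⟨S.g, splicedComplex_d_comp P⟩
  quasiIso :=
    have := hS.mono_f
    quasiIso_toSingle₀Equiv_symm (exact_splicedComplex_d hS.exact P) hS.epi_g
      (exactAt_succ_splicedComplex P S.f)

end SplicedResolution

section Exactness

lemma exact_comp_iff_injective {R : Type*} [Ring R] {A B C D : Type*} [AddCommGroup A]
    [AddCommGroup B] [AddCommGroup C] [AddCommGroup D] [Module R A] [Module R B] [Module R C]
    [Module R D] {f : A →ₗ[R] B} {g : B →ₗ[R] C} (hfg : Function.Exact f g)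
    (hg : Function.Surjective g) (h : C →ₗ[R] D) :
    Function.Exact f (h ∘ₗ g) ↔ Function.Injective h := by
  rw [LinearMap.exact_iff, ← hfg.linearMap_ker_eq, LinearMap.ker_comp, ← Submodule.comap_bot g,
    (Submodule.comap_injective_of_surjective hg).eq_iff, LinearMap.ker_eq_bot]

lemma rTensor_injective_of_lTensor_injective {R : Type*} [CommRing R] {A B C K F N : Type*}
    [AddCommGroup A] [AddCommGroup B] [AddCommGroup C] [AddCommGroup K] [AddCommGroup F]
    [AddCommGroup N] [Module R A] [Module R B] [Module R C] [Module R K] [Module R F]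
    [Module R N] [Module.Flat R F] {f : A →ₗ[R] B} {g : B →ₗ[R] C} {i : K →ₗ[R] F} {p : F →ₗ[R] N}
    (hf : Function.Injective f) (hfg : Function.Exact f g) (hg : Function.Surjective g)
    (hip : Function.Exact i p) (hp : Function.Surjective p)
    (hi : Function.Injective (i.lTensor C)) : Function.Injective (f.rTensor N) := by
  -- Chase in the 3 × 3 diagram `(A → B → C) ⊗ (K → F → N)`; flatness of `F` makes `A ⊗ F → B ⊗ F`
  -- injective.
  refine (injective_iff_map_eq_zero _).2 fun x hx => ?_
  obtain ⟨y, rfl⟩ := LinearMap.lTensor_surjective A hp x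
  obtain ⟨z, hz⟩ : ∃ z, i.lTensor B z = f.rTensor F y :=
    (lTensor_exact B hip hp _).1 (by
      rw [← LinearMap.comp_apply, LinearMap.lTensor_comp_rTensor, ← LinearMap.rTensor_comp_lTensor,
        LinearMap.comp_apply, hx])
  have hgz : g.rTensor K z = 0 := hi <| by
    rw [map_zero, ← LinearMap.comp_apply, LinearMap.lTensor_comp_rTensor,
      ← LinearMap.rTensor_comp_lTensor, LinearMap.comp_apply, hz]
    exact (rTensor_exact F hfg hg).apply_apply_eq_zero y
  obtain ⟨v, rfl⟩ := (rTensor_exact K hfg hg z).1 hgz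
  have hy : i.lTensor A v = y := Module.Flat.rTensor_preserves_injective_linearMap f hf <| by
    rw [← hz, ← LinearMap.comp_apply, ← LinearMap.comp_apply, LinearMap.rTensor_comp_lTensor,
      LinearMap.lTensor_comp_rTensor]
  rw [← hy]
  exact (lTensor_exact A hip hp).apply_apply_eq_zero v

end Exactness

section TorModule

universe u

variable {R : Type u} [CommRing R] (M : ModuleCat.{u} R)

lemma isZero_Tor_succ_iff_exact {N : ModuleCat.{u} R} (P : ProjectiveResolution N) (n : ℕ) :
    Limits.IsZero (((Tor (ModuleCat R) (n + 1)).obj M).obj N) ↔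
      Function.Exact ((P.complex.d (n + 2) (n + 1)).hom.lTensor M)
        ((P.complex.d (n + 1) n).hom.lTensor M) := by
  rw [Tor_obj, (P.isoLeftDerivedObj _ _).isZero_iff]
  change Limits.IsZero (HomologicalComplex.homology _ _) ↔ _
  rw [← HomologicalComplex.exactAt_iff_isZero_homology,
    HomologicalComplex.exactAt_iff' _ (n + 2) (n + 1) n (by simp) (by simp),
    ShortComplex.ShortExact.moduleCat_exact_iff_function_exact]
  rfl

variable {S : ShortComplex (ModuleCat.{u} R)} [Projective S.X₂]

lemma isZero_Tor_one_iff_lTensor_injective (hS : S.ShortExact) :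
    Limits.IsZero (((Tor (ModuleCat R) 1).obj M).obj S.X₃) ↔
      Function.Injective (S.f.hom.lTensor M) := by
  let P := projectiveResolution S.X₁
  have hexact : Function.Exact (P.complex.d 1 0).hom (augmentation P).hom :=
    (ShortComplex.ShortExact.moduleCat_exact_iff_function_exact _).1 (exact_d_augmentation P)
  have hsurj : Function.Surjective (augmentation P).hom :=
    (ModuleCat.epi_iff_surjective _).1 inferInstance
  rw [isZero_Tor_succ_iff_exact M (splicedResolution hS P), ← exact_comp_iff_injective
    (lTensor_exact M hexact hsurj) (LinearMap.lTensor_surjective _ hsurj), ← LinearMap.lTensor_comp]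
  -- The spliced differential `P₀ ⟶ S.X₂` is by definition `augmentation P ≫ S.f`.
  rfl

lemma isZero_Tor_add_two_iff (hS : S.ShortExact) (n : ℕ) :
    Limits.IsZero (((Tor (ModuleCat R) (n + 2)).obj M).obj S.X₃) ↔
      Limits.IsZero (((Tor (ModuleCat R) (n + 1)).obj M).obj S.X₁) := by
  let P := projectiveResolution S.X₁
  rw [isZero_Tor_succ_iff_exact M P, isZero_Tor_succ_iff_exact M (splicedResolution hS P)]
  -- In positive degrees the spliced resolution is `P` shifted by one.
  rfl

end TorModule

section LocalRing

variable {R : Type*} [CommRing R]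

lemma subsingleton_tensorProduct_iff_of_isLocalRing [IsLocalRing R] (M N : Type*)
    [AddCommGroup M] [AddCommGroup N] [Module R M] [Module R N] [Module.Finite R M]
    [Module.Finite R N] : Subsingleton (M ⊗[R] N) ↔ Subsingleton M ∨ Subsingleton N := by
  let k := ResidueField R
  have subsingleton_tensor_iff_of_field : Subsingleton ((k ⊗[R] M) ⊗[k] (k ⊗[R] N)) ↔
      Subsingleton (k ⊗[R] M) ∨ Subsingleton (k ⊗[R] N) := by
    rcases subsingleton_or_nontrivial (k ⊗[R] M) with hM | hM
    · exact iff_of_true inferInstance (Or.inl hM)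
    · rw [Module.FaithfullyFlat.subsingleton_tensorProduct_iff_right,
        or_iff_right (not_subsingleton _)]
  rw [← IsLocalRing.subsingleton_tensorProduct (R := R) (M := M ⊗[R] N),
    (AlgebraTensorModule.distribBaseChange R k M N).toEquiv.subsingleton_congr,
    subsingleton_tensor_iff_of_field, IsLocalRing.subsingleton_tensorProduct,
    IsLocalRing.subsingleton_tensorProduct]

end LocalRing

section TorVanish

variable {R : Type} [CommRing R]

section Presentation

variable (M : Type) [AddCommGroup M] [Module R M] {K F N : Type} [AddCommGroup K]
  [AddCommGroup F] [AddCommGroup N] [Module R K] [Module R F] [Module R N] [Module.Projective R F]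
  {f : K →ₗ[R] F} {g : F →ₗ[R] N}

lemma torVanish_one_iff_lTensor_injective (hf : Function.Injective f) (hfg : Function.Exact f g)
    (hg : Function.Surjective g) : TorVanish R M N 1 ↔ Function.Injective (f.lTensor M) := by
  let S := ModuleCat.shortComplexOfCompEqZero f g hfg.linearMap_comp_eq_zero
  have hS : S.ShortExact := ModuleCat.shortComplex_shortExact S hfg hf hg
  have : Projective S.X₂ := (IsProjective.iff_projective F).1 inferInstance
  rw [TorVanish, ← ModuleCat.isZero_iff_subsingleton]
  exact isZero_Tor_one_iff_lTensor_injective (.of R M) hS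

lemma torVanish_add_two_iff (hf : Function.Injective f) (hfg : Function.Exact f g)
    (hg : Function.Surjective g) (n : ℕ) : TorVanish R M N (n + 2) ↔ TorVanish R M K (n + 1) := by
  let S := ModuleCat.shortComplexOfCompEqZero f g hfg.linearMap_comp_eq_zero
  have hS : S.ShortExact := ModuleCat.shortComplex_shortExact S hfg hf hg
  have : Projective S.X₂ := (IsProjective.iff_projective F).1 inferInstance
  rw [TorVanish, TorVanish, ← ModuleCat.isZero_iff_subsingleton,
    ← ModuleCat.isZero_iff_subsingleton]
  exact isZero_Tor_add_two_iff (.of R M) hS n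

end Presentation

lemma rTensor_injective_of_torVanish_one {A B : Type*} [AddCommGroup A] [AddCommGroup B]
    [Module R A] [Module R B] {C N : Type} [AddCommGroup C] [AddCommGroup N] [Module R C]
    [Module R N] {f : A →ₗ[R] B} {g : B →ₗ[R] C} (hf : Function.Injective f)
    (hfg : Function.Exact f g) (hg : Function.Surjective g) (h : TorVanish R C N 1) :
    Function.Injective (f.rTensor N) := by
  obtain ⟨F, _, _, _, p, hp⟩ : ∃ (F : Type) (_ : AddCommGroup F) (_ : Module R F)
      (_ : Module.Projective R F) (p : F →ₗ[R] N), Function.Surjective p :=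
    ⟨N →₀ R, inferInstance, inferInstance, inferInstance, Finsupp.linearCombination R id,
      Finsupp.linearCombination_id_surjective R N⟩
  have hker : Function.Exact p.ker.subtype p := p.exact_subtype_ker_map
  exact rTensor_injective_of_lTensor_injective hf hfg hg hker hp
    ((torVanish_one_iff_lTensor_injective C p.ker.subtype_injective hker hp).1 h)

end TorVanish

section TorIdeal

lemma rTensor_subtype_eq_zero_of_mul_eq_bot {R : Type*} [CommRing R] {I J : Ideal R}
    (h : I * J = ⊥) : I.subtype.rTensor J = 0 := by
  refine TensorProduct.ext' fun a b => ?_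
  have hab : (a : R) • b = 0 := Subtype.ext (h.le (Ideal.mul_mem_mul a.2 b.2))
  exact (TensorProduct.lid R J).injective (by simp [hab])

variable {R : Type} [CommRing R] (I J : Ideal R)

lemma torVanish_one_quotient_iff_inf_eq_mul :
    TorVanish R (R ⧸ I) (R ⧸ J) 1 ↔ I ⊓ J = I * J := by
  rw [torVanish_one_iff_lTensor_injective (R ⧸ I) J.subtype_injective
    (LinearMap.exact_subtype_mkQ J) J.mkQ_surjective, injective_lTensor_quotient_iff_inf_eq_mul]

lemma torVanish_quotient_add_two_iff (M : Type) [AddCommGroup M] [Module R M] (n : ℕ) :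
    TorVanish R M (R ⧸ J) (n + 2) ↔ TorVanish R M J (n + 1) :=
  torVanish_add_two_iff M J.subtype_injective (LinearMap.exact_subtype_mkQ J) J.mkQ_surjective n

variable {I J}

lemma not_torVanish_two_quotient_of_mul_eq_bot [IsLocalRing R] (hI : I.FG) (hJ : J.FG)
    (hI0 : I ≠ ⊥) (hJ0 : J ≠ ⊥) (hIJ : I * J = ⊥) : ¬ TorVanish R (R ⧸ I) (R ⧸ J) 2 := by
  intro h
  have hinj : Function.Injective (I.subtype.rTensor J) :=
    rTensor_injective_of_torVanish_one I.subtype_injective (LinearMap.exact_subtype_mkQ I)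
      I.mkQ_surjective ((torVanish_quotient_add_two_iff J (R ⧸ I) 0).1 h)
  rw [rTensor_subtype_eq_zero_of_mul_eq_bot hIJ] at hinj
  have hsub : Subsingleton (I ⊗[R] J) := ⟨fun _ _ => hinj rfl⟩
  have := Module.Finite.of_fg hI
  have := Module.Finite.of_fg hJ
  rw [subsingleton_tensorProduct_iff_of_isLocalRing, Submodule.subsingleton_iff_eq_bot,
    Submodule.subsingleton_iff_eq_bot] at hsub
  exact hsub.elim hI0 hJ0

lemma torVanish_one_quotient_of_inf_eq_bot (hIJ : I ⊓ J = ⊥) :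
    TorVanish R (R ⧸ I) (R ⧸ J) 1 :=
  (torVanish_one_quotient_iff_inf_eq_mul I J).2 (hIJ.trans (eq_bot_mono Ideal.mul_le_inf hIJ).symm)

lemma not_torRigid_quotient_of_inf_eq_bot [IsLocalRing R] (hI : I.FG) (hJ : J.FG)
    (hI0 : I ≠ ⊥) (hJ0 : J ≠ ⊥) (hIJ : I ⊓ J = ⊥) : ¬ TorRigid R (R ⧸ I) := fun hrigid =>
  not_torVanish_two_quotient_of_mul_eq_bot hI hJ hI0 hJ0 (eq_bot_mono Ideal.mul_le_inf hIJ) <|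
    hrigid (.of R (R ⧸ J)) (inferInstanceAs (Module.Finite R (R ⧸ J))) 1 le_rfl
      (torVanish_one_quotient_of_inf_eq_bot hIJ) 2 one_le_two

end TorIdeal

section MinimalPrimes

variable {R : Type*} [CommRing R]

lemma sInf_le_iff_mem_of_subset_minimalPrimes {I : Ideal R} {S : Set (Ideal R)}
    (hS : S ⊆ I.minimalPrimes) (hfin : S.Finite) {q : Ideal R} (hq : q ∈ I.minimalPrimes) :
    sInf S ≤ q ↔ q ∈ S := by
  refine ⟨fun h => ?_, fun h => sInf_le h⟩
  rw [← hfin.coe_toFinset, ← Finset.inf_id_eq_sInf] at h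
  obtain ⟨p, hp, hpq⟩ := (Ideal.IsPrime.inf_le' hq.1.1).1 h
  have hpS : p ∈ S := hfin.mem_toFinset.1 hp
  rwa [(hq.2 (hS hpS).1 hpq).antisymm hpq]

lemma sInf_ne_bot_of_ssubset_minimalPrimes [IsNoetherianRing R] {S : Set (Ideal R)}
    (hS : S ⊂ minimalPrimes R) : sInf S ≠ ⊥ := by
  obtain ⟨q, hq, hqS⟩ := Set.exists_of_ssubset hS
  have hfin : S.Finite := (minimalPrimes.finite_of_isNoetherianRing R).subset hS.subset
  exact fun h => hqS ((sInf_le_iff_mem_of_subset_minimalPrimes hS.subset hfin hq).1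
    (h.trans_le bot_le))

lemma sInf_inf_sInf_minimalPrimes_sdiff [IsReduced R] {S : Set (Ideal R)}
    (hS : S ⊆ minimalPrimes R) : sInf S ⊓ sInf (minimalPrimes R \ S) = ⊥ := by
  rw [← sInf_union, Set.union_sdiff_cancel hS, minimalPrimes, Ideal.sInf_minimalPrimes]
  exact nilradical_eq_zero R

end MinimalPrimes

theorem statement8_general (R : Type) [CommRing R] [IsNoetherianRing R] [IsLocalRing R]
    [IsReduced R] (S : Set (Ideal R)) (hS : S ⊆ minimalPrimes R) (hS1 : S.Nonempty)
    (hS2 : S ≠ minimalPrimes R) :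
    TorVanish R (R ⧸ sInf S) (R ⧸ sInf (minimalPrimes R \ S)) 1 ∧
    ¬ TorVanish R (R ⧸ sInf S) (R ⧸ sInf (minimalPrimes R \ S)) 2 ∧
    ¬ TorRigid R (R ⧸ sInf S) ∧
    ¬ TorRigid R (R ⧸ sInf (minimalPrimes R \ S)) := by
  have hI : sInf S ≠ ⊥ := sInf_ne_bot_of_ssubset_minimalPrimes (hS.ssubset_of_ne hS2)
  have hJ : sInf (minimalPrimes R \ S) ≠ ⊥ :=
    sInf_ne_bot_of_ssubset_minimalPrimes (sdiff_lt hS hS1.ne_empty)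
  have hIJ : sInf S ⊓ sInf (minimalPrimes R \ S) = ⊥ := sInf_inf_sInf_minimalPrimes_sdiff hS
  have hfg (I : Ideal R) : I.FG := I.fg_of_isNoetherianRing
  exact ⟨torVanish_one_quotient_of_inf_eq_bot hIJ,
    not_torVanish_two_quotient_of_mul_eq_bot (hfg _) (hfg _) hI hJ
      (eq_bot_mono Ideal.mul_le_inf hIJ),
    not_torRigid_quotient_of_inf_eq_bot (hfg _) (hfg _) hI hJ hIJ,
    not_torRigid_quotient_of_inf_eq_bot (hfg _) (hfg _) hJ hI ((inf_comm _ _).trans hIJ)⟩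

theorem statement8 (R : Type) [CommRing R] [IsNoetherianRing R] [IsLocalRing R]
    [IsReduced R] (hnd : ¬ IsDomain R)
    (hGor : InjDimFinite R R)
    (hdim : ringKrullDim R = 1)
    (hmin : ∃ x ∈ maximalIdeal R, IsSMulRegular R x ∧
      maximalIdeal R ^ 2 = Ideal.span {x} * maximalIdeal R)
    (S : Set (Ideal R)) (hS : S ⊆ minimalPrimes R) (hS1 : S.Nonempty)
    (hS2 : S ≠ minimalPrimes R) :
    TorVanish R (R ⧸ sInf S) (R ⧸ sInf (minimalPrimes R \ S)) 1 ∧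
    ¬ TorVanish R (R ⧸ sInf S) (R ⧸ sInf (minimalPrimes R \ S)) 2 ∧
    ¬ TorRigid R (R ⧸ sInf S) ∧
    ¬ TorRigid R (R ⧸ sInf (minimalPrimes R \ S)) :=
  statement8_general R S hS hS1 hS2
end

section
/- Let (R, m, k) be a commutative Noetherian local ring and let M and N be Ulrich R-modules (possibly M = N). Then: (1) R is regular if and only if pd_R M < ∞; (2) R is regular if and only if N has finite injective dimension over R; (3) setting s = min{dim M, dim N}, the following are equivalent: (a) R is regular; (b) Ext_R^i(M, N) = 0 for all n ≤ i ≤ n+s for some n ≥ 1 with n + dim M ≥ depth_R N; (c) Tor_i^R(M, N) = 0 for all n ≤ i ≤ n+s for some n ≥ 1. -/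
open CategoryTheory IsLocalRing

/-!
If `M` is Ulrich with regular sequence `x` of length `s`, then `M/xM` is a nonzero vector space over
`k`, so `k` is a retract of it; hence vanishing of `Ext` in `s + 1` consecutive degrees passes from
`M` to `k` in either variable. In each case this leads to `Extⁿ(k, k) = 0`, whence `pd k < n` and
`R` is regular by Serre's theorem.

If `dim M ≤ dim N`, the `Ext` condition only yields `Extʲ(k, N) = 0` for a single `j ≥ depth N`, and
reaching `Extⁿ(k, k) = 0` requires that this propagates to all larger degrees. The reason is that
`Extʲ⁺¹(-, N)` is effaceable on modules of finite length (by Artin–Rees when `N` is a vector space,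
then by lifting along the regular sequence): a class on `k` dies on some `L ↠ k` of finite length,
so it comes from `Extʲ` of the kernel, which vanishes by dévissage.

Torsion products are replaced by extensions through character modules,
`Tor_i(M, N)⋆ ≅ Extⁱ(N, M⋆)`, together with the symmetry `Extⁱ(N, M⋆) ≅ Extⁱ(M, N⋆)`.
-/

open RingTheory.Sequence
open CategoryTheory.Abelian (Ext)
open scoped Pointwise TensorProduct

universe u

section ExtVanishing

universe w v₁ u₁

variable {C : Type u₁} [Category.{v₁} C] [Abelian C] [HasExt.{w} C] {n : ℕ}

lemma subsingleton_ext_of_retract_left {X X' Y : C} (r : Retract X X')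
    (h : Subsingleton (Ext X' Y n)) : Subsingleton (Ext X Y n) := by
  refine subsingleton_of_forall_eq 0 fun e => ?_
  rw [← Ext.mk₀_id_comp e, ← r.retract, ← Ext.mk₀_comp_mk₀_assoc,
    h.eq_zero ((Ext.mk₀ r.r).comp e (zero_add n)), Ext.comp_zero]

lemma subsingleton_ext_of_retract_right {X Y Y' : C} (r : Retract Y Y')
    (h : Subsingleton (Ext X Y' n)) : Subsingleton (Ext X Y n) := by
  refine subsingleton_of_forall_eq 0 fun e => ?_
  have he : (e.comp (Ext.mk₀ r.i) (add_zero n)).comp (Ext.mk₀ r.r) (add_zero n) = e := by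
    rw [Ext.comp_assoc_of_third_deg_zero, Ext.mk₀_comp_mk₀, r.retract, Ext.comp_mk₀_id]
  rw [← he, h.eq_zero (e.comp (Ext.mk₀ r.i) (add_zero n)), Ext.zero_comp]

variable {S : ShortComplex C} (hS : S.ShortExact)
include hS

lemma subsingleton_ext_X₁_right {X : C} (h₃ : Subsingleton (Ext X S.X₃ n))
    (h₂ : Subsingleton (Ext X S.X₂ (n + 1))) : Subsingleton (Ext X S.X₁ (n + 1)) := by
  refine subsingleton_of_forall_eq 0 fun e => ?_
  obtain ⟨e₃, rfl⟩ := Ext.covariant_sequence_exact₁ X hS e (h₂.eq_zero _) rfl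
  rw [h₃.eq_zero e₃, Ext.zero_comp]

lemma subsingleton_ext_X₃_right {X : C} (h₂ : Subsingleton (Ext X S.X₂ n))
    (h₁ : Subsingleton (Ext X S.X₁ (n + 1))) : Subsingleton (Ext X S.X₃ n) := by
  refine subsingleton_of_forall_eq 0 fun e => ?_
  obtain ⟨e₂, rfl⟩ := Ext.covariant_sequence_exact₃ X hS e rfl (h₁.eq_zero _)
  rw [h₂.eq_zero e₂, Ext.zero_comp]

lemma subsingleton_ext_X₁_left {Y : C} (h₂ : Subsingleton (Ext S.X₂ Y n))
    (h₃ : Subsingleton (Ext S.X₃ Y (n + 1))) : Subsingleton (Ext S.X₁ Y n) := by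
  refine subsingleton_of_forall_eq 0 fun e => ?_
  obtain ⟨e₂, rfl⟩ := Ext.contravariant_sequence_exact₁ hS Y e (add_comm 1 n) (h₃.eq_zero _)
  rw [h₂.eq_zero e₂, Ext.comp_zero]

lemma subsingleton_ext_X₂_left {Y : C} (h₁ : Subsingleton (Ext S.X₁ Y n))
    (h₃ : Subsingleton (Ext S.X₃ Y n)) : Subsingleton (Ext S.X₂ Y n) := by
  refine subsingleton_of_forall_eq 0 fun e => ?_
  obtain ⟨e₃, rfl⟩ := Ext.contravariant_sequence_exact₂ hS Y e (h₁.eq_zero _)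
  rw [h₃.eq_zero e₃, Ext.comp_zero]

lemma subsingleton_ext_X₃_left {Y : C} (h₁ : Subsingleton (Ext S.X₁ Y n))
    (h₂ : Subsingleton (Ext S.X₂ Y (n + 1))) : Subsingleton (Ext S.X₃ Y (n + 1)) := by
  refine subsingleton_of_forall_eq 0 fun e => ?_
  obtain ⟨e₁, rfl⟩ := Ext.contravariant_sequence_exact₃ hS Y e (h₂.eq_zero _) (add_comm 1 n)
  rw [h₁.eq_zero e₁, Ext.comp_zero]

lemma exists_extension_of_subsingleton_ext_one {Y : C} (h : Subsingleton (Ext S.X₃ Y 1))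
    (φ : S.X₁ ⟶ Y) : ∃ ψ : S.X₂ ⟶ Y, S.f ≫ ψ = φ := by
  obtain ⟨e, he⟩ :=
    Ext.contravariant_sequence_exact₁ hS Y (Ext.mk₀ φ) (add_zero 1) (h.eq_zero _)
  obtain ⟨ψ, rfl⟩ := (Ext.mk₀_bijective _ _).2 e
  exact ⟨ψ, (Ext.mk₀_bijective _ _).1 (by rw [← he, Ext.mk₀_comp_mk₀])⟩

lemma subsingleton_ext_X₁_right_of_lift {X : C} (h₂ : Subsingleton (Ext X S.X₂ 1))
    (h : ∀ φ : X ⟶ S.X₃, ∃ ψ : X ⟶ S.X₂, ψ ≫ S.g = φ) : Subsingleton (Ext X S.X₁ 1) := by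
  refine subsingleton_of_forall_eq 0 fun e => ?_
  obtain ⟨e₃, rfl⟩ := Ext.covariant_sequence_exact₁ X hS e (h₂.eq_zero _) rfl
  obtain ⟨φ, rfl⟩ := (Ext.mk₀_bijective _ _).2 e₃
  obtain ⟨ψ, rfl⟩ := h φ
  rw [← Ext.mk₀_comp_mk₀, Ext.comp_assoc_of_second_deg_zero, hS.comp_extClass, Ext.comp_zero]

end ExtVanishing

section RegularSequence

variable {R : Type u} [CommRing R] {n : ℕ}

lemma subsingleton_ext_quotSMulTop_left {N : ModuleCat.{u} R} {r : R} {M : Type u}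
    [AddCommGroup M] [Module R M] (hr : IsSMulRegular M r)
    (h : Subsingleton (Ext (ModuleCat.of R M) N n))
    (h' : Subsingleton (Ext (ModuleCat.of R M) N (n + 1))) :
    Subsingleton (Ext (ModuleCat.of R (QuotSMulTop r M)) N (n + 1)) :=
  subsingleton_ext_X₃_left
    (IsSMulRegular.smulShortComplex_shortExact (M := ModuleCat.of R M) hr) h h'

lemma subsingleton_ext_quotSMulTop_right {M : ModuleCat.{u} R} {r : R} {N : Type u}
    [AddCommGroup N] [Module R N] (hr : IsSMulRegular N r)
    (h : Subsingleton (Ext M (ModuleCat.of R N) n))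
    (h' : Subsingleton (Ext M (ModuleCat.of R N) (n + 1))) :
    Subsingleton (Ext M (ModuleCat.of R (QuotSMulTop r N)) n) :=
  subsingleton_ext_X₃_right
    (IsSMulRegular.smulShortComplex_shortExact (M := ModuleCat.of R N) hr) h h'

lemma subsingleton_ext_quotient_left {N : ModuleCat.{u} R} {rs : List R} {M : Type u}
    [AddCommGroup M] [Module R M] (hM : IsWeaklyRegular M rs)
    (h : ∀ i, n ≤ i → i ≤ n + rs.length → Subsingleton (Ext (ModuleCat.of R M) N i)) :
    Subsingleton (Ext (ModuleCat.of R (M ⧸ Ideal.ofList rs • (⊤ : Submodule R M))) N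
      (n + rs.length)) := by
  induction rs generalizing M n with
  | nil =>
    let e : (M ⧸ Ideal.ofList ([] : List R) • (⊤ : Submodule R M)) ≃ₗ[R] M :=
      Submodule.quotEquivOfEqBot _ (by simp)
    exact subsingleton_ext_of_retract_left (Retract.ofIso e.toModuleIso) (h n le_rfl le_rfl)
  | cons r rs ih =>
    obtain ⟨hr, hrs⟩ := (isWeaklyRegular_cons_iff M r rs).1 hM
    let e := Submodule.quotOfListConsSMulTopEquivQuotSMulTopInner M r rs
    have := ih (n := n + 1) hrs fun i hi hi' => by
      obtain ⟨i, rfl⟩ : ∃ j, i = j + 1 := ⟨i - 1, by lia⟩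
      exact subsingleton_ext_quotSMulTop_left hr
        (h i (by lia) (by grind)) (h (i + 1) (by lia) (by grind))
    rw [List.length_cons, ← Nat.add_assoc, Nat.add_right_comm]
    exact subsingleton_ext_of_retract_left (Retract.ofIso e.toModuleIso) this

lemma subsingleton_ext_quotient_right {M : ModuleCat.{u} R} {rs : List R} {N : Type u}
    [AddCommGroup N] [Module R N] (hN : IsWeaklyRegular N rs)
    (h : ∀ i, n ≤ i → i ≤ n + rs.length → Subsingleton (Ext M (ModuleCat.of R N) i)) :
    Subsingleton (Ext M (ModuleCat.of R (N ⧸ Ideal.ofList rs • (⊤ : Submodule R N))) n) := by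
  induction rs generalizing N with
  | nil =>
    let e : (N ⧸ Ideal.ofList ([] : List R) • (⊤ : Submodule R N)) ≃ₗ[R] N :=
      Submodule.quotEquivOfEqBot _ (by simp)
    exact subsingleton_ext_of_retract_right (Retract.ofIso e.toModuleIso) (h n le_rfl le_rfl)
  | cons r rs ih =>
    obtain ⟨hr, hrs⟩ := (isWeaklyRegular_cons_iff N r rs).1 hN
    let e := Submodule.quotOfListConsSMulTopEquivQuotSMulTopInner N r rs
    have := ih hrs fun i hi hi' =>
      subsingleton_ext_quotSMulTop_right hr (h i hi (by grind)) (h (i + 1) (by lia) (by grind))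
    exact subsingleton_ext_of_retract_right (Retract.ofIso e.toModuleIso) this

end RegularSequence

section ResidueField

variable {R : Type u} [CommRing R] [IsLocalRing R]

lemma nonempty_retract_residueField_of_notMem {W : Type u} [AddCommGroup W] [Module R W] {w : W}
    (hw : ∀ r ∈ maximalIdeal R, r • w = 0) (hw' : w ∉ maximalIdeal R • (⊤ : Submodule R W)) :
    Nonempty (Retract (ModuleCat.of R (ResidueField R)) (ModuleCat.of R W)) := by
  let V := W ⧸ maximalIdeal R • (⊤ : Submodule R W)
  have tors : Module.IsTorsionBySet R V (maximalIdeal R) :=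
    Module.isTorsionBySet_quotient_ideal_smul W (maximalIdeal R)
  let : Module (ResidueField R) V := tors.module
  have : IsScalarTower R (ResidueField R) V := tors.isScalarTower
  let π : W →ₗ[R] V := Submodule.mkQ _
  have hπw : π w ≠ 0 := fun h => hw' ((Submodule.Quotient.mk_eq_zero _).1 h)
  let j := LinearMap.toSpanSingleton (ResidueField R) V (π w)
  obtain ⟨p, hp⟩ := j.exists_leftInverse_of_injective (LinearMap.ker_toSpanSingleton _ hπw)
  have hpw : p (π w) = 1 := by simpa [j] using LinearMap.congr_fun hp 1
  let i : ResidueField R →ₗ[R] W :=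
    (maximalIdeal R).liftQ (LinearMap.toSpanSingleton R W w) fun r hr => hw r hr
  refine ⟨⟨ModuleCat.ofHom i, ModuleCat.ofHom (p.restrictScalars R ∘ₗ π), ModuleCat.hom_ext ?_⟩⟩
  refine Submodule.linearMap_qext _ (LinearMap.ext_ring ?_)
  change p (π ((1 : R) • w)) = 1
  rw [one_smul, hpw]

lemma nonempty_retract_residueField {V : Type u} [AddCommGroup V] [Module R V] [Nontrivial V]
    (hV : maximalIdeal R ≤ Module.annihilator R V) :
    Nonempty (Retract (ModuleCat.of R (ResidueField R)) (ModuleCat.of R V)) := by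
  obtain ⟨v, hv⟩ := exists_ne (0 : V)
  refine nonempty_retract_residueField_of_notMem
    (fun r hr => Module.mem_annihilator.1 (hV hr) v) fun h => hv ?_
  rwa [Submodule.le_annihilator_iff.1 (hV.trans_eq Submodule.annihilator_top.symm)] at h

lemma injective_lTensor_residueField_of_forall_exists_extension {K F : Type*} [AddCommGroup K]
    [Module R K] [AddCommGroup F] [Module R F] {f : K →ₗ[R] F}
    (h : ∀ φ : K →ₗ[R] ResidueField R, ∃ ψ : F →ₗ[R] ResidueField R, ψ ∘ₗ f = φ) :
    Function.Injective (f.lTensor (ResidueField R)) := by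
  refine (injective_iff_map_eq_zero _).2 fun t ht => ?_
  refine (Module.forall_dual_apply_eq_zero_iff (ResidueField R) t).1 fun δ => ?_
  obtain ⟨φ, rfl⟩ := (LinearMap.liftBaseChangeEquiv (ResidueField R)).surjective δ
  obtain ⟨ψ, rfl⟩ := h φ
  have factor : (ψ.liftBaseChange (ResidueField R)).restrictScalars R ∘ₗ
      f.lTensor (ResidueField R) = ((ψ ∘ₗ f).liftBaseChange (ResidueField R)).restrictScalars R :=
    TensorProduct.ext' fun a x => rfl
  simpa [ht] using (LinearMap.congr_fun factor t).symm

lemma hasProjectiveDimensionLT_of_subsingleton_ext_residueField [IsNoetherianRing R] {n : ℕ}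
    (M : Type u) [AddCommGroup M] [Module R M] [Module.Finite R M]
    (h : Subsingleton (Ext (ModuleCat.of R M) (ModuleCat.of R (ResidueField R)) n)) :
    HasProjectiveDimensionLT (ModuleCat.of R M) n := by
  induction n generalizing M with
  | zero =>
    have hom : Subsingleton (M →ₗ[R] ResidueField R) :=
      ((Ext.homEquiv₀.trans ModuleCat.homEquiv).subsingleton_congr).1 h
    have : Subsingleton (ResidueField R ⊗[R] M) := subsingleton_of_forall_eq 0 fun t =>
      (Module.forall_dual_apply_eq_zero_iff (ResidueField R) t).1 fun δ => by
        rw [← (LinearMap.liftBaseChangeEquiv (ResidueField R)).apply_symm_apply δ,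
          hom.eq_zero ((LinearMap.liftBaseChangeEquiv (ResidueField R)).symm δ), map_zero,
          LinearMap.zero_apply]
    have := subsingleton_tensorProduct.1 this
    exact (ModuleCat.isZero_of_subsingleton _).hasProjectiveDimensionLT_zero
  | succ n ih =>
    obtain ⟨F, _, _, _, _, g, hg⟩ := Module.exists_finite_presentation R M
    have hS := LinearMap.shortExact_shortComplexKer hg
    cases n with
    | zero =>
      have inj := injective_lTensor_residueField_of_forall_exists_extension
        (f := (LinearMap.ker g).subtype) fun φ => by
          obtain ⟨ψ, hψ⟩ := exists_extension_of_subsingleton_ext_one hS h (ModuleCat.ofHom φ)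
          exact ⟨ψ.hom, congrArg ModuleCat.Hom.hom hψ⟩
      have := Module.free_of_lTensor_residueField_injective _ g hg
        (LinearMap.exact_subtype_ker_map g) inj
      infer_instance
    | succ n =>
      have hK := ih (LinearMap.ker g) (subsingleton_ext_X₁_left hS
        (Ext.subsingleton_of_projective _ _ _) h)
      exact (hS.hasProjectiveDimensionLT_X₃_iff n inferInstance).2 hK

end ResidueField

section CharacterModule

variable {R : Type u} [CommRing R] {A B C : Type u} [AddCommGroup A] [Module R A] [AddCommGroup B]
  [Module R B] [AddCommGroup C] [Module R C]

lemma characterModule_dual_exact {f : A →ₗ[R] B} {g : B →ₗ[R] C} (h : Function.Exact f g) :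
    Function.Exact (CharacterModule.dual g) (CharacterModule.dual f) := by
  refine LinearMap.exact_of_comp_of_mem_range ?_ fun c hc => ?_
  · rw [← CharacterModule.dual_comp, h.linearMap_comp_eq_zero, CharacterModule.dual_zero]
  have hker : (LinearMap.ker g).toAddSubgroup ≤ AddMonoidHom.ker c := fun b hb => by
    obtain ⟨a, rfl⟩ := (h b).1 hb
    exact DFunLike.congr_fun hc a
  have inj : Function.Injective ((LinearMap.ker g).liftQ g le_rfl) :=
    LinearMap.ker_eq_bot.1 (Submodule.ker_liftQ_eq_bot' _ _ rfl)
  obtain ⟨c', hc'⟩ := CharacterModule.dual_surjective_of_injective _ inj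
    (QuotientAddGroup.lift (LinearMap.ker g).toAddSubgroup c hker)
  exact ⟨c', DFunLike.ext _ _ fun b => DFunLike.congr_fun hc' (Submodule.Quotient.mk b)⟩

lemma characterModule_dual_exact_iff {f : A →ₗ[R] B} {g : B →ₗ[R] C} :
    Function.Exact (CharacterModule.dual g) (CharacterModule.dual f) ↔ Function.Exact f g := by
  refine ⟨fun h => LinearMap.exact_of_comp_of_mem_range ?_ fun b hb => ?_,
    characterModule_dual_exact⟩
  · refine LinearMap.ext fun a => CharacterModule.eq_zero_of_character_apply fun c => ?_
    exact DFunLike.congr_fun ((h _).2 ⟨c, rfl⟩) a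
  · rw [← (LinearMap.range f).ker_mkQ, LinearMap.mem_ker]
    refine CharacterModule.eq_zero_of_character_apply fun c => ?_
    obtain ⟨c', hc'⟩ := (h (CharacterModule.dual (LinearMap.range f).mkQ c)).1 <| by
      rw [← LinearMap.comp_apply, ← CharacterModule.dual_comp, LinearMap.range_mkQ_comp,
        CharacterModule.dual_zero, LinearMap.zero_apply]
    exact (DFunLike.congr_fun hc' b).symm.trans ((congrArg c' hb).trans (map_zero c'))

lemma exact_lcomp_characterModule_iff {f : A →ₗ[R] B} {g : B →ₗ[R] C} (X : Type u)
    [AddCommGroup X] [Module R X] :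
    Function.Exact (g.lcomp R (CharacterModule X)) (f.lcomp R (CharacterModule X)) ↔
      Function.Exact (f.lTensor X) (g.lTensor X) := by
  rw [← LinearMap.rTensor_exact_iff_lTensor_exact,
    ← characterModule_dual_exact_iff (f := f.rTensor X)]
  exact Function.Exact.iff_of_ladder_linearEquiv (e₁ := CharacterModule.homEquiv.symm)
    (e₂ := CharacterModule.homEquiv.symm) (e₃ := CharacterModule.homEquiv.symm) rfl rfl

lemma shortExact_characterModule_dual {S : ShortComplex (ModuleCat.{u} R)} (hS : S.ShortExact) :
    (ShortComplex.mk (ModuleCat.ofHom (CharacterModule.dual S.g.hom))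
      (ModuleCat.ofHom (CharacterModule.dual S.f.hom)) (ModuleCat.hom_ext
        (characterModule_dual_exact ((ShortComplex.ShortExact.moduleCat_exact_iff_function_exact
          S).1 hS.exact)).linearMap_comp_eq_zero)).ShortExact :=
  ModuleCat.shortComplex_shortExact _
    (characterModule_dual_exact
      ((ShortComplex.ShortExact.moduleCat_exact_iff_function_exact S).1 hS.exact))
    (CharacterModule.dual_injective_of_surjective _ hS.moduleCat_surjective_g)
    (CharacterModule.dual_surjective_of_injective _ hS.moduleCat_injective_f)

instance injective_characterModule_of_flat [Module.Flat R A] :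
    Injective (ModuleCat.of R (CharacterModule A)) :=
  Module.injective_object_of_injective_module R (CharacterModule A)
    (inj := Module.Flat.iff_characterModule_injective.1 inferInstance)

/-- The bijection between `R`-linear maps `A → B⋆` and `B → A⋆`, both sides being the bilinear
maps from `A × B` to the rational circle. -/
noncomputable def characterModuleFlip (A B : Type u) [AddCommGroup A] [Module R A]
    [AddCommGroup B] [Module R B] :
    (A →ₗ[R] CharacterModule B) ≃ₗ[R] (B →ₗ[R] CharacterModule A) :=
  CharacterModule.homEquiv ≪≫ₗ CharacterModule.congr (TensorProduct.comm R A B) ≪≫ₗ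
    CharacterModule.homEquiv.symm

lemma dual_comp_characterModuleFlip (f : A →ₗ[R] B) (ψ : B →ₗ[R] CharacterModule C) :
    CharacterModule.dual f ∘ₗ characterModuleFlip B C ψ = characterModuleFlip A C (ψ ∘ₗ f) :=
  rfl

lemma subsingleton_ext_characterModule_flip {A : Type u} [AddCommGroup A] [Module R A] {n : ℕ}
    (h : Subsingleton (Ext (ModuleCat.of R A) (ModuleCat.of R (CharacterModule B)) (n + 1))) :
    Subsingleton (Ext (ModuleCat.of R B) (ModuleCat.of R (CharacterModule A)) (n + 1)) := by
  let g : (A →₀ R) →ₗ[R] A := Finsupp.linearCombination R id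
  have hg : Function.Surjective g := Finsupp.linearCombination_id_surjective R A
  have hS := LinearMap.shortExact_shortComplexKer hg
  have hS' := shortExact_characterModule_dual hS
  have hB : ∀ i, Subsingleton
      (Ext (ModuleCat.of R B) (ModuleCat.of R (CharacterModule (A →₀ R))) (i + 1)) :=
    fun i => subsingleton_of_forall_eq 0 Ext.eq_zero_of_injective
  match n, h with
  | 0, h =>
    refine subsingleton_ext_X₁_right_of_lift hS' (hB 0) fun φ => ?_
    obtain ⟨ψ, hψ⟩ := exists_extension_of_subsingleton_ext_one hS h
      (ModuleCat.ofHom ((characterModuleFlip _ _).symm φ.hom))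
    refine ⟨ModuleCat.ofHom (characterModuleFlip _ _ ψ.hom), ModuleCat.hom_ext ?_⟩
    exact (dual_comp_characterModuleFlip _ _).trans
      ((congrArg _ (congrArg ModuleCat.Hom.hom hψ)).trans (LinearEquiv.apply_symm_apply _ _))
  | n + 1, h =>
    exact subsingleton_ext_X₁_right hS' (subsingleton_ext_characterModule_flip
      (subsingleton_ext_X₁_left hS (Ext.subsingleton_of_projective _ _ _) h)) (hB (n + 1))

lemma subsingleton_ext_characterModule_comm {n : ℕ} :
    Subsingleton (Ext (ModuleCat.of R A) (ModuleCat.of R (CharacterModule B)) (n + 1)) ↔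
      Subsingleton (Ext (ModuleCat.of R B) (ModuleCat.of R (CharacterModule A)) (n + 1)) :=
  ⟨subsingleton_ext_characterModule_flip, subsingleton_ext_characterModule_flip⟩

end CharacterModule

section Resolution

variable {R : Type u} [CommRing R] {n : ℕ}

lemma subsingleton_ext_succ_iff_exact {X : ModuleCat.{u} R} (P : ProjectiveResolution X)
    (Y : ModuleCat.{u} R) :
    Subsingleton (Ext X Y (n + 1)) ↔
      Function.Exact ((P.complex.d (n + 1) n).hom.lcomp R Y)
        ((P.complex.d (n + 2) (n + 1)).hom.lcomp R Y) := by
  constructor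
  · refine fun h => LinearMap.exact_of_comp_of_mem_range ?_ fun f hf => ?_
    · exact LinearMap.ext fun f => (congrArg (fun d => f ∘ₗ ModuleCat.Hom.hom d)
        (P.complex.d_comp_d (n + 2) (n + 1) n)).trans (LinearMap.comp_zero f)
    · obtain ⟨g, hg⟩ := (P.extMk_eq_zero_iff (ModuleCat.ofHom f) (n + 2) rfl
        (ModuleCat.hom_ext hf) n rfl).1 (h.eq_zero _)
      exact ⟨g.hom, congrArg ModuleCat.Hom.hom hg⟩
  · refine fun h => subsingleton_of_forall_eq 0 fun e => ?_
    obtain ⟨f, hf, rfl⟩ := P.extMk_surjective e (n + 2) rfl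
    obtain ⟨g, hg⟩ := (h f.hom).1 (congrArg ModuleCat.Hom.hom hf)
    exact (P.extMk_eq_zero_iff f (n + 2) rfl hf n rfl).2
      ⟨ModuleCat.ofHom g, ModuleCat.hom_ext hg⟩

lemma subsingleton_homology_succ_iff_exact {C : ChainComplex (ModuleCat.{u} R) ℕ} :
    Subsingleton (C.homology (n + 1)) ↔ Function.Exact (C.d (n + 2) (n + 1)) (C.d (n + 1) n) := by
  rw [← ModuleCat.isZero_iff_subsingleton, ← HomologicalComplex.exactAt_iff_isZero_homology,
    HomologicalComplex.exactAt_iff' _ (n + 2) (n + 1) n (by simp) (by simp),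
    ShortComplex.ShortExact.moduleCat_exact_iff_function_exact]
  rfl

end Resolution

section FunctorComparison

variable {R : Type} [CommRing R] {X Y : Type} [AddCommGroup X] [Module R X] [AddCommGroup Y]
  [Module R Y] {n : ℕ}

lemma extVanish_succ_iff :
    ExtVanish R X Y (n + 1) ↔
      Subsingleton (Ext (ModuleCat.of R X) (ModuleCat.of R Y) (n + 1)) := by
  let P := ProjectiveResolution.of (ModuleCat.of R X)
  rw [subsingleton_ext_succ_iff_exact P, ExtVanish, ← ModuleCat.isZero_iff_subsingleton,
    (P.isoExt (R := R) (n + 1) (ModuleCat.of R Y)).isZero_iff,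
    ← HomologicalComplex.exactAt_iff_isZero_homology,
    HomologicalComplex.exactAt_iff' _ n (n + 1) (n + 2) (by simp) (by simp),
    ShortComplex.ShortExact.moduleCat_exact_iff_function_exact]
  let e (Z : ModuleCat R) := (ModuleCat.homLinearEquiv (S := R) (M := Z) (N := .of R Y)).symm
  exact Function.Exact.iff_of_ladder_linearEquiv (e₁ := e _) (e₂ := e _) (e₃ := e _) rfl rfl

lemma torVanish_succ_iff :
    TorVanish R X Y (n + 1) ↔
      Subsingleton (Ext (ModuleCat.of R Y) (ModuleCat.of R (CharacterModule X)) (n + 1)) := by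
  let P := ProjectiveResolution.of (ModuleCat.of R Y)
  let T := (MonoidalCategory.tensoringLeft (ModuleCat R)).obj (ModuleCat.of R X)
  rw [subsingleton_ext_succ_iff_exact P, exact_lcomp_characterModule_iff, TorVanish]
  exact ((P.isoLeftDerivedObj T (n + 1)).toLinearEquiv.toEquiv.subsingleton_congr).trans
    (subsingleton_homology_succ_iff_exact (C := (T.mapHomologicalComplex _).obj P.complex))

lemma projDimFinite_iff :
    ProjDimFinite R X ↔ ∃ n, HasProjectiveDimensionLT (ModuleCat.of R X) n := by
  constructor <;> rintro ⟨n, h⟩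
  · refine ⟨n + 1, (hasProjectiveDimensionLT_iff _ _).2 fun i hi Z e => ?_⟩
    obtain ⟨i, rfl⟩ := Nat.exists_eq_add_of_le' (Nat.one_le_of_lt hi)
    exact (extVanish_succ_iff.1 (h Z (i + 1) (by lia))).eq_zero e
  · refine ⟨n + 1, fun Z i hi => ?_⟩
    obtain ⟨i, rfl⟩ := Nat.exists_eq_add_of_le' (Nat.one_le_of_lt hi)
    exact extVanish_succ_iff.2 (HasProjectiveDimensionLT.subsingleton _ n _ (by lia) _)

lemma injDimFinite_iff :
    InjDimFinite R X ↔ ∃ n, HasInjectiveDimensionLT (ModuleCat.of R X) n := by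
  constructor <;> rintro ⟨n, h⟩
  · refine ⟨n + 1, (hasInjectiveDimensionLT_iff _ _).2 fun i hi Z e => ?_⟩
    obtain ⟨i, rfl⟩ := Nat.exists_eq_add_of_le' (Nat.one_le_of_lt hi)
    exact (extVanish_succ_iff.1 (h Z (i + 1) (by lia))).eq_zero e
  · refine ⟨n + 1, fun Z i hi => ?_⟩
    obtain ⟨i, rfl⟩ := Nat.exists_eq_add_of_le' (Nat.one_le_of_lt hi)
    exact extVanish_succ_iff.2 (HasInjectiveDimensionLT.subsingleton _ n _ (by lia) _)

end FunctorComparison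

section RegularLocalRing

variable {R : Type u} [CommRing R]

lemma isWeaklyRegular_self_cons {x : R} {rs : List R} (hx : IsSMulRegular R x)
    (h : IsWeaklyRegular (R ⧸ Ideal.span {x}) (rs.map (Ideal.Quotient.mk (Ideal.span {x})))) :
    IsWeaklyRegular R (x :: rs) := by
  let e : (R ⧸ Ideal.span {x}) ≃ₗ[R] QuotSMulTop x R :=
    Submodule.quotEquivOfEq _ _ (by rw [← Submodule.ideal_span_singleton_smul]; simp)
  exact (isWeaklyRegular_cons_iff R x rs).2 ⟨hx, (e.isWeaklyRegular_congr rs).1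
    ((isWeaklyRegular_map_algebraMap_iff (R ⧸ Ideal.span {x}) (R ⧸ Ideal.span {x}) rs).1 h)⟩

lemma spanFinrank_ofList_le_length (rs : List R) : (Ideal.ofList rs).spanFinrank ≤ rs.length := by
  classical
  have hspan : Ideal.ofList rs = Submodule.span R (rs.toFinset : Set R) := by simp [Ideal.ofList]
  rw [hspan]
  exact (Submodule.spanFinrank_span_le_ncard_of_finite rs.toFinset.finite_toSet).trans
    ((Set.ncard_coe_finset _).trans_le rs.toFinset_card_le)

lemma exists_isPrime_le_ringKrullDim_quotient {d : ℕ} (hd : d ≤ ringKrullDim R) :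
    ∃ q : Ideal R, q.IsPrime ∧ d ≤ ringKrullDim (R ⧸ q) := by
  obtain ⟨l, hl⟩ := Order.le_krullDim_iff.1 hd
  refine ⟨l.head.asIdeal, l.head.2, ?_⟩
  rw [ringKrullDim_quotient]
  exact Order.le_krullDim_iff.2 ⟨⟨l.length, fun i => ⟨l i, l.head_le i⟩, fun i => l.step i⟩, hl⟩

variable [IsLocalRing R]

lemma isLocalRing_quotient {I : Ideal R} (hI : I ≠ ⊤) : IsLocalRing (R ⧸ I) :=
  have := Ideal.Quotient.nontrivial_iff.2 hI
  IsLocalRing.of_surjective' (Ideal.Quotient.mk I) Ideal.Quotient.mk_surjective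

lemma comap_maximalIdeal_quotient (I : Ideal R) [IsLocalRing (R ⧸ I)] :
    (maximalIdeal (R ⧸ I)).comap (Ideal.Quotient.mk I) = maximalIdeal R :=
  eq_maximalIdeal
    (Ideal.comap_isMaximal_of_surjective (Ideal.Quotient.mk I) Ideal.Quotient.mk_surjective)

lemma span_singleton_ne_top_of_mem_maximalIdeal {x : R} (hx : x ∈ maximalIdeal R) :
    Ideal.span {x} ≠ ⊤ :=
  fun h => hx (Ideal.span_singleton_eq_top.1 h)

lemma ofList_map_quotient_eq_maximalIdeal_iff {x : R} [IsLocalRing (R ⧸ Ideal.span {x})]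
    (rs : List R) :
    Ideal.ofList (rs.map (Ideal.Quotient.mk (Ideal.span {x}))) = maximalIdeal (R ⧸ Ideal.span {x}) ↔
      Ideal.ofList (x :: rs) = maximalIdeal R := by
  have comap_ofList : (Ideal.ofList (rs.map (Ideal.Quotient.mk (Ideal.span {x})))).comap
      (Ideal.Quotient.mk (Ideal.span {x})) = Ideal.ofList (x :: rs) := by
    rw [← Ideal.map_ofList, Ideal.comap_map_of_surjective _ Ideal.Quotient.mk_surjective,
      Ideal.ofList_cons, sup_comm]
    exact congrArg (· ⊔ _) Ideal.mk_ker
  rw [← comap_ofList, ← comap_maximalIdeal_quotient (Ideal.span {x})]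
  exact (Ideal.comap_injective_of_surjective _ Ideal.Quotient.mk_surjective).eq_iff.symm

variable [IsNoetherianRing R]

lemma ringKrullDim_le_length {rs : List R} (h : Ideal.ofList rs = maximalIdeal R) :
    ringKrullDim R ≤ rs.length := by
  refine (ringKrullDim_le_spanFinrank_maximalIdeal R).trans ?_
  rw [← h]
  exact_mod_cast spanFinrank_ofList_le_length rs

lemma ringKrullDim_le_ringKrullDim_quotient_span_singleton_add_one {x : R}
    (hx : x ∈ maximalIdeal R) : ringKrullDim R ≤ ringKrullDim (R ⧸ Ideal.span {x}) + 1 := by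
  have := ringKrullDim_le_ringKrullDim_quotient_add_card ({x} : Finset R)
    (by simpa [ringJacobson_eq_maximalIdeal R] using hx)
  rwa [Finset.coe_singleton, Finset.card_singleton, Nat.cast_one] at this

lemma le_span_singleton_of_ringKrullDim_quotient {x : R} {n : ℕ} (hx : x ∈ maximalIdeal R)
    [IsDomain (R ⧸ Ideal.span {x})] (hdim : ringKrullDim (R ⧸ Ideal.span {x}) ≤ n) {q : Ideal R}
    [q.IsPrime] (hq : (n + 1 : ℕ) ≤ ringKrullDim (R ⧸ q)) : q ≤ Ideal.span {x} := by
  intro r hr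
  by_contra hrx
  have := isLocalRing_quotient (I := q) Ideal.IsPrime.ne_top'
  have hxq : Ideal.Quotient.mk q x ∈ maximalIdeal (R ⧸ q) := by
    rwa [← Ideal.mem_comap, comap_maximalIdeal_quotient]
  have drop_q := ringKrullDim_le_ringKrullDim_quotient_span_singleton_add_one hxq
  rw [← Set.image_singleton, ← Ideal.map_span, ringKrullDim_eq_of_ringEquiv
    (DoubleQuot.quotQuotEquivQuotSup q (Ideal.span {x}))] at drop_q
  have drop_x : ringKrullDim (R ⧸ q ⊔ Ideal.span {x}) + 1 ≤ ringKrullDim (R ⧸ Ideal.span {x}) :=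
    ringKrullDim_succ_le_of_surjective (Ideal.Quotient.factor le_sup_right)
      (Ideal.Quotient.factor_surjective _)
      (mem_nonZeroDivisors_of_ne_zero (by rwa [ne_eq, Ideal.Quotient.eq_zero_iff_mem]))
      (by rw [Ideal.Quotient.factor_mk, Ideal.Quotient.eq_zero_iff_mem]
          exact Ideal.mem_sup_left hr)
  have : n + 1 ≤ n := by exact_mod_cast hq.trans (drop_q.trans (drop_x.trans hdim))
  lia

-- A prime `q` with `dim R/q = dim R` is contained in `(x)` but does not contain `x`, so `q = xq`
-- and `q = 0` by Nakayama.
lemma isDomain_of_isDomain_quotient {x : R} {n : ℕ} (hx : x ∈ maximalIdeal R)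
    [IsDomain (R ⧸ Ideal.span {x})] (hdim : ringKrullDim (R ⧸ Ideal.span {x}) ≤ n)
    (hR : (n + 1 : ℕ) ≤ ringKrullDim R) : IsDomain R := by
  obtain ⟨q, hq, hdq⟩ := exists_isPrime_le_ringKrullDim_quotient hR
  have hqx := le_span_singleton_of_ringKrullDim_quotient hx hdim hdq
  have hxq : x ∉ q := fun h => by
    rw [le_antisymm hqx ((Ideal.span_singleton_le_iff_mem _).2 h)] at hdq
    have : n + 1 ≤ n := by exact_mod_cast hdq.trans hdim
    lia
  have q_le_smul : q ≤ maximalIdeal R • q := fun r hr => by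
    obtain ⟨s, rfl⟩ := Ideal.mem_span_singleton.1 (hqx hr)
    exact Submodule.smul_mem_smul hx ((hq.mem_or_mem hr).resolve_left hxq)
  obtain rfl : q = ⊥ := Submodule.eq_bot_of_le_smul_of_le_jacobson_bot (maximalIdeal R) q
    (IsNoetherian.noetherian q) q_le_smul (maximalIdeal_le_jacobson _)
  exact IsDomain.of_bot_isPrime R

lemma isDomain_and_isWeaklyRegular_of_ringKrullDim_eq_length {R : Type u} [CommRing R]
    [IsLocalRing R] [IsNoetherianRing R] {rs : List R} (hm : Ideal.ofList rs = maximalIdeal R)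
    (hd : ringKrullDim R = rs.length) : IsDomain R ∧ IsWeaklyRegular R rs :=
  match rs, hm, hd with
  | [], hm, _ => ⟨(isField_iff_maximalIdeal_eq.2 (by rw [← hm, Ideal.ofList_nil])).isDomain,
      IsWeaklyRegular.nil R R⟩
  | x :: rs, hm, hd => by
    have hx : x ∈ maximalIdeal R := by
      rw [← hm, Ideal.ofList_cons]
      exact Ideal.mem_sup_left (Ideal.mem_span_singleton_self x)
    have := isLocalRing_quotient (span_singleton_ne_top_of_mem_maximalIdeal hx)
    have hm' := (ofList_map_quotient_eq_maximalIdeal_iff rs).2 hm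
    have hd' : ringKrullDim (R ⧸ Ideal.span {x}) = rs.length := by
      refine le_antisymm (by simpa using ringKrullDim_le_length hm') ?_
      have := hd.ge.trans (ringKrullDim_le_ringKrullDim_quotient_span_singleton_add_one hx)
      rw [List.length_cons, Nat.cast_add, Nat.cast_one] at this
      exact ENat.WithBot.add_le_add_one_right_iff.1 this
    obtain ⟨_, hrs⟩ := isDomain_and_isWeaklyRegular_of_ringKrullDim_eq_length hm'
      (by rw [hd', List.length_map])
    have hR : IsDomain R := isDomain_of_isDomain_quotient hx hd'.le hd.ge
    have hx0 : x ≠ 0 := by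
      rintro rfl
      rw [Ideal.span_singleton_zero,
        ← ringKrullDim_eq_of_ringEquiv (RingEquiv.quotientBot R).symm, hd] at hd'
      have : rs.length + 1 = rs.length := by exact_mod_cast hd'
      lia
    exact ⟨hR, isWeaklyRegular_self_cons (IsSMulRegular.of_ne_zero hx0) hrs⟩
termination_by rs.length

theorem isRegularLocalRing_iff_exists_isWeaklyRegular :
    IsRegularLocalRing R ↔ ∃ rs, IsWeaklyRegular R rs ∧ Ideal.ofList rs = maximalIdeal R := by
  constructor
  · intro h
    obtain ⟨s, hcard, hspan⟩ := Submodule.FG.exists_span_finset_card_eq_spanFinrank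
      (IsNoetherian.noetherian (maximalIdeal R))
    have hm : Ideal.ofList s.toList = maximalIdeal R := by simpa [Ideal.ofList] using hspan
    exact ⟨s.toList, (isDomain_and_isWeaklyRegular_of_ringKrullDim_eq_length hm
      (by rw [← h.spanFinrank_maximalIdeal, ← hcard, s.length_toList])).2, hm⟩
  · rintro ⟨rs, hrs, hm⟩
    have hreg : IsRegular R rs := (IsLocalRing.isRegular_iff_isWeaklyRegular_of_subset_maximalIdeal
      fun r hr => hm ▸ Ideal.subset_span hr).2 hrs
    let : Field (R ⧸ maximalIdeal R) := Ideal.Quotient.field _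
    have hd := ringKrullDim_add_length_eq_ringKrullDim_of_isRegular rs hreg
    rw [hm, ringKrullDim_eq_zero_of_field, zero_add] at hd
    refine IsRegularLocalRing.of_spanFinrank_maximalIdeal_le R ?_
    rw [← hd, ← hm]
    exact_mod_cast spanFinrank_ofList_le_length rs

end RegularLocalRing

lemma isRegularLocal_iff_isRegularLocalRing {R : Type} [CommRing R] [IsNoetherianRing R]
    [IsLocalRing R] : IsRegularLocal R ↔ IsRegularLocalRing R := by
  constructor
  · rintro ⟨s, hspan, hcard⟩
    refine IsRegularLocalRing.of_spanFinrank_maximalIdeal_le R ?_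
    rw [← hcard, ← hspan]
    exact_mod_cast (Submodule.spanFinrank_span_le_ncard_of_finite s.finite_toSet).trans_eq
      (Set.ncard_coe_finset s)
  · intro h
    obtain ⟨s, hcard, hspan⟩ := Submodule.FG.exists_span_finset_card_eq_spanFinrank
      (IsNoetherian.noetherian (maximalIdeal R))
    exact ⟨s, hspan, by rw [hcard, h.spanFinrank_maximalIdeal]⟩

section Serre

variable {R : Type u} [CommRing R]

lemma injective_quotSMulTop_map {A B C : Type*} [AddCommGroup A] [Module R A] [AddCommGroup B]
    [Module R B] [AddCommGroup C] [Module R C] {f : A →ₗ[R] B} {g : B →ₗ[R] C} {x : R}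
    (hC : IsSMulRegular C x) (hf : Function.Injective f) (hfg : Function.Exact f g) :
    Function.Injective (QuotSMulTop.map x f) := by
  refine (LinearMap.exact_zero_iff_injective (QuotSMulTop x PUnit) _).1 ?_
  simpa only [map_zero] using
    QuotSMulTop.map_first_exact_on_four_term_exact_of_isSMulRegular_last
      ((LinearMap.exact_zero_iff_injective PUnit f).2 hf) hfg hC

lemma shortExact_quotSMulTop_map {A B C : Type u} [AddCommGroup A] [Module R A] [AddCommGroup B]
    [Module R B] [AddCommGroup C] [Module R C] {f : A →ₗ[R] B} {g : B →ₗ[R] C} {x : R}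
    (hC : IsSMulRegular C x) (hf : Function.Injective f) (hfg : Function.Exact f g)
    (hg : Function.Surjective g) :
    (ShortComplex.mk
      (ModuleCat.ofHom ((QuotSMulTop.map x f).extendScalarsOfSurjective
        (Ideal.Quotient.mk_surjective : Function.Surjective (algebraMap R (R ⧸ Ideal.span {x})))))
      (ModuleCat.ofHom ((QuotSMulTop.map x g).extendScalarsOfSurjective
        Ideal.Quotient.mk_surjective))
      (ModuleCat.hom_ext (LinearMap.ext
        (QuotSMulTop.map_exact x hfg hg).apply_apply_eq_zero))).ShortExact :=
  have inj : Function.Injective (QuotSMulTop.map x f) := injective_quotSMulTop_map hC hf hfg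
  ModuleCat.shortComplex_shortExact _ (QuotSMulTop.map_exact x hfg hg) inj
    (QuotSMulTop.map_surjective x hg)

lemma projective_quotSMulTop {M : Type u} [AddCommGroup M] [Module R M] [Module.Projective R M]
    (x : R) : Module.Projective (R ⧸ Ideal.span {x}) (QuotSMulTop x M) :=
  Module.Projective.of_equiv ((QuotSMulTop.equivQuotTensor x M).extendScalarsOfSurjective
    Ideal.Quotient.mk_surjective).symm

lemma hasProjectiveDimensionLT_quotSMulTop {x : R} (hx : IsSMulRegular R x) {n : ℕ} {M : Type u}
    [AddCommGroup M] [Module R M] (hxM : IsSMulRegular M x)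
    (h : HasProjectiveDimensionLT (ModuleCat.of R M) (n + 1)) :
    HasProjectiveDimensionLT (ModuleCat.of (R ⧸ Ideal.span {x}) (QuotSMulTop x M)) (n + 1) := by
  induction n generalizing M with
  | zero =>
    have := (IsProjective.iff_projective M).2 (projective_iff_hasProjectiveDimensionLT_one.2 h)
    have := projective_quotSMulTop (M := M) x
    infer_instance
  | succ n ih =>
    obtain ⟨F, _, _, _, hxF, g, hg⟩ : ∃ (F : Type u) (_ : AddCommGroup F) (_ : Module R F),
        Module.Free R F ∧ IsSMulRegular F x ∧ ∃ g : F →ₗ[R] M, Function.Surjective g :=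
      ⟨M →₀ R, _, _, inferInstance,
        fun a b hab => Finsupp.ext fun i => hx (DFunLike.congr_fun hab i),
        _, Finsupp.linearCombination_id_surjective R M⟩
    have hker := ih (hxF.of_injective _ (Submodule.subtype_injective (LinearMap.ker g)))
      (((LinearMap.shortExact_shortComplexKer hg).hasProjectiveDimensionLT_X₃_iff n
        inferInstance).1 h)
    have := projective_quotSMulTop (M := F) x
    have hS := shortExact_quotSMulTop_map hxM (Submodule.subtype_injective _)
      (LinearMap.exact_subtype_ker_map g) hg
    exact (hS.hasProjectiveDimensionLT_X₃_iff n inferInstance).2 hker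

variable [IsLocalRing R]

lemma one_tmul_eq_zero_iff_mem_maximalIdeal_smul_top {M : Type*} [AddCommGroup M] [Module R M]
    (m : M) : (1 : ResidueField R) ⊗ₜ[R] m = 0 ↔ m ∈ maximalIdeal R • (⊤ : Submodule R M) := by
  refine (TensorProduct.quotTensorEquivQuotSMul M (maximalIdeal R)).map_eq_zero_iff.symm.trans ?_
  refine Iff.trans (Eq.congr_left ?_) (Submodule.Quotient.mk_eq_zero _)
  exact (TensorProduct.quotTensorEquivQuotSMul_mk_tmul _ (1 : R) m).trans (by rw [one_smul])

-- If `1 ⊗ f a = 0`, then `f a ∈ mF` is killed by the socle element `s`, hence so is `a`, and its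
-- coordinates cannot be units.
lemma injective_lTensor_residueField_of_smul_maximalIdeal_eq_zero {s : R} (hs : s ≠ 0)
    (hsm : ∀ r ∈ maximalIdeal R, s * r = 0) {K F : Type*} [AddCommGroup K] [Module R K]
    [Module.Free R K] [AddCommGroup F] [Module R F] {f : K →ₗ[R] F} (hf : Function.Injective f) :
    Function.Injective (f.lTensor (ResidueField R)) := by
  refine (injective_iff_map_eq_zero _).2 fun t ht => ?_
  obtain ⟨a, rfl⟩ := TensorProduct.mk_surjective R K (ResidueField R) residue_surjective t
  have hfa : f a ∈ maximalIdeal R • (⊤ : Submodule R F) :=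
    (one_tmul_eq_zero_iff_mem_maximalIdeal_smul_top _).1 ht
  have hsfa : s • f a = 0 := by
    refine Submodule.smul_induction_on hfa (fun r hr y _ => ?_) fun y z hy hz => ?_
    · rw [smul_smul, hsm r hr, zero_smul]
    · rw [smul_add, hy, hz, add_zero]
  have hsa : s • a = 0 := hf (by rw [map_smul, hsfa, map_zero])
  let b := Module.Free.chooseBasis R K
  have coord_mem (i) : b.repr a i ∈ maximalIdeal R := fun hu => hs <| by
    refine (hu.mul_left_eq_zero).1 ?_
    simpa using congrArg (b.repr · i) hsa
  refine (one_tmul_eq_zero_iff_mem_maximalIdeal_smul_top a).2 ?_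
  rw [← b.linearCombination_repr a]
  exact Submodule.sum_mem _ fun i _ => Submodule.smul_mem_smul (coord_mem i) trivial

lemma mk_notMem_maximalIdeal_smul_top {x : R} (hx : x ∈ maximalIdeal R)
    (hx₂ : x ∉ maximalIdeal R ^ 2) [IsLocalRing (R ⧸ Ideal.span {x})] :
    (Submodule.Quotient.mk ⟨x, hx⟩ : QuotSMulTop x (maximalIdeal R)) ∉
      maximalIdeal (R ⧸ Ideal.span {x}) •
        (⊤ : Submodule (R ⧸ Ideal.span {x}) (QuotSMulTop x (maximalIdeal R))) := fun hw => hx₂ <| by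
  let π : QuotSMulTop x (maximalIdeal R) →ₗ[R]
      maximalIdeal R ⧸ maximalIdeal R • (⊤ : Submodule R (maximalIdeal R)) :=
    Submodule.factor (by rintro _ ⟨z, _, rfl⟩; exact Submodule.smul_mem_smul hx trivial)
  have hπ : π (Submodule.Quotient.mk ⟨x, hx⟩) = 0 := by
    refine Submodule.smul_induction_on (p := fun y => π y = 0) hw (fun s hs y _ => ?_)
      fun y z hy hz => by rw [map_add, hy, hz, add_zero]
    obtain ⟨r, rfl⟩ := Ideal.Quotient.mk_surjective s
    rw [← Ideal.mem_comap, comap_maximalIdeal_quotient] at hs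
    obtain ⟨z, hz⟩ := Submodule.Quotient.mk_surjective _ (π y)
    have : π (Ideal.Quotient.mk (Ideal.span {x}) r • y) = r • π y := map_smul π r y
    rw [this, ← hz, ← Submodule.Quotient.mk_smul, Submodule.Quotient.mk_eq_zero]
    exact Submodule.smul_mem_smul hs trivial
  have hmem := Submodule.mem_map_of_mem (f := (maximalIdeal R).subtype)
    ((Submodule.Quotient.mk_eq_zero _).1 hπ)
  rw [Submodule.map_smul'', Submodule.map_subtype_top] at hmem
  rwa [pow_two]

lemma nonempty_retract_residueField_quotSMulTop {x : R} (hx : x ∈ maximalIdeal R)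
    (hx₂ : x ∉ maximalIdeal R ^ 2) [IsLocalRing (R ⧸ Ideal.span {x})] :
    Nonempty (Retract (ModuleCat.of _ (ResidueField (R ⧸ Ideal.span {x})))
      (ModuleCat.of (R ⧸ Ideal.span {x}) (QuotSMulTop x (maximalIdeal R)))) := by
  refine nonempty_retract_residueField_of_notMem (fun s hs => ?_)
    (mk_notMem_maximalIdeal_smul_top hx hx₂)
  obtain ⟨r, rfl⟩ := Ideal.Quotient.mk_surjective s
  rw [← Ideal.mem_comap, comap_maximalIdeal_quotient] at hs
  refine (Submodule.Quotient.mk_eq_zero _).2 ⟨⟨r, hs⟩, trivial, Subtype.ext ?_⟩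
  exact mul_comm x r

lemma hasProjectiveDimensionLT_maximalIdeal {n : ℕ}
    (h : HasProjectiveDimensionLT (ModuleCat.of R (ResidueField R)) (n + 2)) :
    HasProjectiveDimensionLT (ModuleCat.of R (maximalIdeal R)) (n + 1) := by
  have hker : HasProjectiveDimensionLT
      (ModuleCat.of R (LinearMap.ker (Submodule.mkQ (maximalIdeal R)))) (n + 1) :=
    ((LinearMap.shortExact_shortComplexKer (Submodule.mkQ_surjective
      (maximalIdeal R))).hasProjectiveDimensionLT_X₃_iff n
        (inferInstanceAs (Projective (ModuleCat.of R R)))).1 h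
  rwa [Submodule.ker_mkQ] at hker

variable [IsNoetherianRing R]

lemma exists_ne_zero_of_maximalIdeal_mem_associatedPrimes
    (h : maximalIdeal R ∈ associatedPrimes R R) :
    ∃ s : R, s ≠ 0 ∧ ∀ r ∈ maximalIdeal R, s * r = 0 := by
  obtain ⟨hprime, s, hs⟩ := isAssociatedPrime_iff.1 h
  refine ⟨s, ?_, fun r hr => ?_⟩
  · rintro rfl
    exact hprime.ne_top (by rw [hs]; simp)
  · rw [hs, Submodule.mem_colon_singleton, Submodule.mem_bot] at hr
    rwa [mul_comm]

lemma free_of_maximalIdeal_mem_associatedPrimes (hR : maximalIdeal R ∈ associatedPrimes R R)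
    {n : ℕ} {M : Type u} [AddCommGroup M] [Module R M] [Module.Finite R M]
    (h : HasProjectiveDimensionLT (ModuleCat.of R M) (n + 1)) : Module.Free R M := by
  induction n generalizing M with
  | zero =>
    have := (IsProjective.iff_projective M).2 (projective_iff_hasProjectiveDimensionLT_one.2 h)
    exact Module.free_of_flat_of_isLocalRing
  | succ n ih =>
    obtain ⟨F, _, _, _, _, g, hg⟩ := Module.exists_finite_presentation R M
    have : Module.Free R (LinearMap.ker g) := ih
      (((LinearMap.shortExact_shortComplexKer hg).hasProjectiveDimensionLT_X₃_iff n
        inferInstance).1 h)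
    obtain ⟨s, hs, hsm⟩ := exists_ne_zero_of_maximalIdeal_mem_associatedPrimes hR
    exact Module.free_of_lTensor_residueField_injective _ g hg (LinearMap.exact_subtype_ker_map g)
      (injective_lTensor_residueField_of_smul_maximalIdeal_eq_zero hs hsm
        (Submodule.subtype_injective _))

-- Prime avoidance, with `m²` as one of the two ideals that are allowed not to be prime.
lemma maximalIdeal_mem_associatedPrimes (hm : maximalIdeal R ≠ ⊥)
    (h : ∀ x ∈ maximalIdeal R, IsSMulRegular R x → x ∈ maximalIdeal R ^ 2) :
    maximalIdeal R ∈ associatedPrimes R R := by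
  have cover : (maximalIdeal R : Set R) ⊆
      ⋃ I ∈ insert (maximalIdeal R ^ 2) (associatedPrimes R R), (id I : Ideal R) := by
    intro x hx
    by_cases hx₂ : x ∈ maximalIdeal R ^ 2
    · exact Set.mem_biUnion (Set.mem_insert _ _) hx₂
    · refine Set.biUnion_subset_biUnion_left (Set.subset_insert _ _) ?_
      have : x ∈ (nonZeroDivisors R : Set R)ᶜ := fun hn =>
        hx₂ (h x hx (Module.Flat.isSMulRegular_of_nonZeroDivisors hn))
      rwa [← biUnion_associatedPrimes_eq_compl_nonZeroDivisors] at this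
  obtain ⟨P, rfl | hP, hle⟩ := (Ideal.subset_union_prime_finite
    ((associatedPrimes.finite R R).insert _) (maximalIdeal R ^ 2) (maximalIdeal R ^ 2)
    fun I hI hne _ => (hI.resolve_left hne).isPrime).1 cover
  · refine absurd (Submodule.eq_bot_of_le_smul_of_le_jacobson_bot (maximalIdeal R) _
      (IsNoetherian.noetherian _) ?_ (maximalIdeal_le_jacobson _)) hm
    rwa [smul_eq_mul, ← pow_two]
  · rwa [(maximalIdeal.isMaximal R).eq_of_le hP.isPrime.ne_top hle]

lemma exists_isSMulRegular_notMem_sq {n : ℕ} (hm : maximalIdeal R ≠ ⊥)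
    (h : HasProjectiveDimensionLT (ModuleCat.of R (ResidueField R)) (n + 1)) :
    ∃ x ∈ maximalIdeal R, IsSMulRegular R x ∧ x ∉ maximalIdeal R ^ 2 := by
  by_contra! hx
  have := free_of_maximalIdeal_mem_associatedPrimes (maximalIdeal_mem_associatedPrimes hm hx) h
  have := Module.annihilator_eq_bot.2 (inferInstance : FaithfulSMul R (ResidueField R))
  exact hm (by rw [← this]; exact (Ideal.annihilator_quotient).symm)

end Serre

-- Induction on the dimension through `R/x` for a regular `x ∈ m \ m²`: reduction mod `x` preserves
-- `pd m < ∞`, and `k` is a retract of `m/xm`.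
lemma isRegularLocalRing_of_hasProjectiveDimensionLT_of_ringKrullDim_lt (R : Type u) [CommRing R]
    [IsLocalRing R] [IsNoetherianRing R] {d n : ℕ} (hd : ringKrullDim R < d)
    (h : HasProjectiveDimensionLT (ModuleCat.of R (ResidueField R)) (n + 1)) :
    IsRegularLocalRing R := by
  induction d generalizing R with
  | zero => exact absurd hd (not_lt.2 ringKrullDim_nonneg_of_nontrivial)
  | succ d ih =>
    refine isRegularLocalRing_iff_exists_isWeaklyRegular.2 ?_
    by_cases hm : maximalIdeal R = ⊥
    · exact ⟨[], .nil R R, by rw [hm, Ideal.ofList_nil]⟩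
    obtain ⟨x, hx, hreg, hx₂⟩ := exists_isSMulRegular_notMem_sq hm h
    have : IsLocalRing (R ⧸ Ideal.span {x}) :=
      isLocalRing_quotient (span_singleton_ne_top_of_mem_maximalIdeal hx)
    have hdim : ringKrullDim (R ⧸ Ideal.span {x}) < d := by
      rw [← ringKrullDim_quotient_span_singleton_succ_eq_ringKrullDim hreg hx] at hd
      by_contra! hd'
      exact absurd hd (not_lt.2 (by push_cast; exact add_le_add_left hd' 1))
    have hpd_quot := hasProjectiveDimensionLT_quotSMulTop hreg
      (hreg.of_injective _ (Submodule.subtype_injective _))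
      (hasProjectiveDimensionLT_maximalIdeal
        (hasProjectiveDimensionLT_of_ge _ (n + 1) _ (Nat.le_succ _)))
    obtain ⟨r⟩ := nonempty_retract_residueField_quotSMulTop hx hx₂
    obtain ⟨ys, hys, hm'⟩ := isRegularLocalRing_iff_exists_isWeaklyRegular.1
      (ih _ hdim (r.hasProjectiveDimensionLT _))
    obtain ⟨rs, rfl⟩ := List.map_surjective_iff.2
      (Ideal.Quotient.mk_surjective (I := Ideal.span {x})) ys
    exact ⟨x :: rs, isWeaklyRegular_self_cons hreg hys,
      (ofList_map_quotient_eq_maximalIdeal_iff rs).1 hm'⟩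

section GlobalDimension

variable {R : Type u} [CommRing R] [IsLocalRing R]

theorem isRegularLocalRing_of_hasProjectiveDimensionLT_residueField [IsNoetherianRing R] {n : ℕ}
    (h : HasProjectiveDimensionLT (ModuleCat.of R (ResidueField R)) n) : IsRegularLocalRing R :=
  isRegularLocalRing_of_hasProjectiveDimensionLT_of_ringKrullDim_lt R
    (d := (maximalIdeal R).spanFinrank + 1)
    ((ringKrullDim_le_spanFinrank_maximalIdeal R).trans_lt (by exact_mod_cast Nat.lt_succ_self _))
    (hasProjectiveDimensionLT_of_ge _ n _ n.le_succ)

lemma isRegularLocalRing_of_subsingleton_ext_residueField [IsNoetherianRing R] {n : ℕ}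
    (h : Subsingleton (Ext (ModuleCat.of R (ResidueField R)) (ModuleCat.of R (ResidueField R)) n)) :
    IsRegularLocalRing R :=
  isRegularLocalRing_of_hasProjectiveDimensionLT_residueField
    (hasProjectiveDimensionLT_of_subsingleton_ext_residueField _ h)

lemma subsingleton_ext_residueField_of_characterModule {n : ℕ} {M : Type u} [AddCommGroup M]
    [Module R M]
    (h : Subsingleton (Ext (ModuleCat.of R (ResidueField R)) (ModuleCat.of R (CharacterModule M))
      (n + 1))) :
    Subsingleton (Ext (ModuleCat.of R M) (ModuleCat.of R (ResidueField R)) (n + 1)) := by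
  have ann : maximalIdeal R ≤ Module.annihilator R (CharacterModule (ResidueField R)) :=
    fun r hr => Module.mem_annihilator.2 fun c => CharacterModule.ext _ fun y => by
      rw [CharacterModule.smul_apply, Algebra.smul_def, ResidueField.algebraMap_eq,
        (residue_eq_zero_iff r).2 hr, zero_mul, map_zero]
      rfl
  obtain ⟨c, hc⟩ := CharacterModule.exists_character_apply_ne_zero_of_ne_zero
    (one_ne_zero : (1 : ResidueField R) ≠ 0)
  have : Nontrivial (CharacterModule (ResidueField R)) :=
    nontrivial_of_ne c 0 fun h => hc (by rw [h]; rfl)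
  obtain ⟨r⟩ := nonempty_retract_residueField ann
  exact subsingleton_ext_of_retract_right r (subsingleton_ext_characterModule_comm.1 h)

end GlobalDimension

lemma exists_hasProjectiveDimensionLT_residueField (R : Type u) [CommRing R]
    [IsRegularLocalRing R] :
    ∃ n, HasProjectiveDimensionLT (ModuleCat.of R (ResidueField R)) (n + 1) := by
  obtain ⟨rs, hrs, hm⟩ :=
    isRegularLocalRing_iff_exists_isWeaklyRegular.1 (inferInstance : IsRegularLocalRing R)
  have pd_quotient := ModuleCat.projectiveDimension_quotient_eq_add_length_of_isWeaklyRegular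
    (ModuleCat.of R R) rs hrs fun r hr => by rw [← hm]; exact Ideal.subset_span hr
  rw [ModuleCat.projectiveDimension_eq_zero_of_projective (ModuleCat.of R R), zero_add, hm,
    smul_eq_mul, Ideal.mul_top] at pd_quotient
  exact ⟨rs.length, (projectiveDimension_le_iff _ _).1 pd_quotient.le⟩

theorem exists_forall_hasProjectiveDimensionLT (R : Type u) [CommRing R] [IsRegularLocalRing R] :
    ∃ n, ∀ (M : Type u) [AddCommGroup M] [Module R M] [Module.Finite R M],
      HasProjectiveDimensionLT (ModuleCat.of R M) (n + 1) := by
  obtain ⟨n, h⟩ := exists_hasProjectiveDimensionLT_residueField R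
  exact ⟨n, fun M _ _ _ => hasProjectiveDimensionLT_of_subsingleton_ext_residueField M
    (subsingleton_ext_residueField_of_characterModule
      (HasProjectiveDimensionLT.subsingleton _ _ _ le_rfl _))⟩

section Effaceability

variable {R : Type u} [CommRing R] {I : Ideal R}

lemma mk₀_comp_extClass_comp_eq_zero {A B G K : Type u} [AddCommGroup A] [Module R A]
    [AddCommGroup B] [Module R B] [AddCommGroup G] [Module R G] [AddCommGroup K] [Module R K]
    {h : A →ₗ[R] B} (hh : Function.Surjective h) {g : G →ₗ[R] K} (hg : Function.Surjective g)
    {α : A →ₗ[R] G} {β : B →ₗ[R] K} (comm : g ∘ₗ α = β ∘ₗ h) {W : Submodule R (LinearMap.ker g)}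
    (hW : (LinearMap.ker h).map α ≤ W.map (LinearMap.ker g).subtype) {Y : ModuleCat.{u} R} {n : ℕ}
    {e : Ext (ModuleCat.of R (LinearMap.ker g)) Y n}
    (he : (Ext.mk₀ (ModuleCat.ofHom W.subtype)).comp e (zero_add n) = 0) :
    (Ext.mk₀ (ModuleCat.ofHom β)).comp
      ((LinearMap.shortExact_shortComplexKer hg).extClass.comp e (add_comm 1 n))
      (zero_add (n + 1)) = 0 := by
  have mem_ker (y : LinearMap.ker h) : α y ∈ LinearMap.ker g := by
    rw [LinearMap.mem_ker, ← LinearMap.comp_apply, comm, LinearMap.comp_apply, y.2, map_zero]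
  let ι : LinearMap.ker h →ₗ[R] LinearMap.ker g :=
    (α ∘ₗ (LinearMap.ker h).subtype).codRestrict _ mem_ker
  have hι (y) : ι y ∈ W := by
    obtain ⟨w, hw, hwy⟩ := hW (Submodule.mem_map_of_mem y.2)
    exact (Subtype.ext hwy : w = ι y) ▸ hw
  let φ : LinearMap.shortComplexKer h ⟶ LinearMap.shortComplexKer g :=
    { τ₁ := ModuleCat.ofHom ι
      τ₂ := ModuleCat.ofHom α
      τ₃ := ModuleCat.ofHom β
      comm₂₃ := ModuleCat.hom_ext comm }
  have hφ : φ.τ₁ = ModuleCat.ofHom (ι.codRestrict W hι) ≫ ModuleCat.ofHom W.subtype := rfl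
  change (Ext.mk₀ φ.τ₃).comp _ _ = 0
  rw [← Ext.comp_assoc (a₁₂ := 1) _ _ _ (by lia) (by lia) (by lia),
    ← ShortComplex.ShortExact.extClass_naturality (LinearMap.shortExact_shortComplexKer hh) _ φ,
    Ext.comp_assoc (a₂₃ := n) _ _ _ (by lia) (by lia) (by lia), hφ,
    ← Ext.mk₀_comp_mk₀_assoc, he, Ext.comp_zero, Ext.comp_zero]

lemma exists_pow_smul_inf_le_map_subtype [IsNoetherianRing R] {G : Type u} [AddCommGroup G]
    [Module R G] [Module.Finite R G] (I : Ideal R) (Z : Submodule R G) (c : ℕ) :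
    ∃ n, I ^ n • ⊤ ⊓ Z ≤ (I ^ c • ⊤ : Submodule R Z).map Z.subtype := by
  obtain ⟨k, hk⟩ := I.exists_pow_inf_eq_pow_smul Z
  refine ⟨c + k, ?_⟩
  rw [hk _ le_add_self, Nat.add_sub_cancel, Submodule.map_smul'', Submodule.map_subtype_top]
  exact Submodule.smul_mono le_rfl inf_le_right

-- Dimension shifting: by Artin–Rees, `Iⁿ G` meets the syzygy `ker g` inside `I^c (ker g)`, so the
-- extension class pulled back to `Iⁿ K` factors through the vanishing one.
lemma exists_mk₀_pow_smul_comp_eq_zero [IsNoetherianRing R] {N : Type u} [AddCommGroup N]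
    [Module R N] (hN : I ≤ Module.annihilator R N) (i : ℕ) (K : Type u) [AddCommGroup K]
    [Module R K] [Module.Finite R K] (e : Ext (ModuleCat.of R K) (ModuleCat.of R N) i) :
    ∃ c, (Ext.mk₀ (ModuleCat.ofHom (I ^ c • ⊤ : Submodule R K).subtype)).comp e
      (zero_add i) = 0 := by
  induction i generalizing K with
  | zero =>
    obtain ⟨φ, rfl⟩ := (Ext.mk₀_bijective _ _).2 e
    have hφ : I ^ 1 • ⊤ ≤ LinearMap.ker φ.hom := Submodule.smul_le.2 fun r hr y _ => by
      rw [LinearMap.mem_ker, map_smul, Module.mem_annihilator.1 (hN (by simpa using hr))]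
    have h0 : ModuleCat.ofHom (I ^ 1 • ⊤ : Submodule R K).subtype ≫ φ = 0 := by
      ext x
      exact hφ x.2
    exact ⟨1, by rw [Ext.mk₀_comp_mk₀, h0, Ext.mk₀_zero]⟩
  | succ i ih =>
    obtain ⟨G, _, _, _, _, g, hg⟩ := Module.exists_finite_presentation R K
    have : Projective (LinearMap.shortComplexKer g).X₂ :=
      (IsProjective.iff_projective G).1 inferInstance
    obtain ⟨e', rfl⟩ := precomp_extClass_surjective_of_projective_X₂ _
      (LinearMap.shortExact_shortComplexKer hg) i e
    obtain ⟨c, hc⟩ := ih (LinearMap.ker g) e'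
    obtain ⟨n, hn⟩ := exists_pow_smul_inf_le_map_subtype I (LinearMap.ker g) c
    have map_top : (I ^ n • ⊤ : Submodule R G).map g = I ^ n • ⊤ := by
      rw [Submodule.map_smul'', Submodule.map_top, LinearMap.range_eq_top.2 hg]
    let h : (I ^ n • ⊤ : Submodule R G) →ₗ[R] (I ^ n • ⊤ : Submodule R K) :=
      g.restrict fun y hy => map_top.le (Submodule.mem_map_of_mem hy)
    have hh : Function.Surjective h := fun z => by
      obtain ⟨y, hy, hyz⟩ := map_top.ge z.2
      exact ⟨⟨y, hy⟩, Subtype.ext hyz⟩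
    have hW : (LinearMap.ker h).map (I ^ n • ⊤ : Submodule R G).subtype ≤
        (I ^ c • ⊤ : Submodule R (LinearMap.ker g)).map (LinearMap.ker g).subtype := by
      rintro _ ⟨y, hy, rfl⟩
      exact hn ⟨y.2, congrArg Subtype.val hy⟩
    exact ⟨n, mk₀_comp_extClass_comp_eq_zero hh hg rfl hW hc⟩

/-- The finitely generated modules killed by a power of the ideal `I`. -/
def finitePowTorsion (I : Ideal R) : ObjectProperty (ModuleCat.{u} R) :=
  fun L => Module.Finite R L ∧ ∃ a, I ^ a ≤ Module.annihilator R L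

/-- A class `e ∈ Ext^j(L, Y)` is effaceable if it vanishes after pulling back along some
epimorphism onto `L` from a finitely generated module killed by a power of `I`. -/
def IsEffaceable (I : Ideal R) {L Y : ModuleCat.{u} R} {j : ℕ} (e : Ext L Y j) : Prop :=
  ∃ (L' : ModuleCat.{u} R) (π : L' ⟶ L), finitePowTorsion I L' ∧ Epi π ∧
    (Ext.mk₀ π).comp e (zero_add j) = 0

/-- `Ext^j(-, Y)` is effaceable on finitely generated modules killed by a power of `I`. -/
def ExtEffaceable (I : Ideal R) (Y : ModuleCat.{u} R) (j : ℕ) : Prop :=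
  ∀ (L : ModuleCat.{u} R) (e : Ext L Y j), finitePowTorsion I L → IsEffaceable I e

lemma extEffaceable_succ_of_le_annihilator [IsNoetherianRing R] {N : Type u} [AddCommGroup N]
    [Module R N] (hN : I ≤ Module.annihilator R N) (i : ℕ) :
    ExtEffaceable I (ModuleCat.of R N) (i + 1) := by
  rintro L e ⟨_, a, ha⟩
  obtain ⟨F, _, _, _, _, p, hp⟩ := Module.exists_finite_presentation R L
  have : Projective (LinearMap.shortComplexKer p).X₂ :=
    (IsProjective.iff_projective F).1 inferInstance
  obtain ⟨e', rfl⟩ := precomp_extClass_surjective_of_projective_X₂ _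
    (LinearMap.shortExact_shortComplexKer hp) i e
  obtain ⟨c, hc⟩ := exists_mk₀_pow_smul_comp_eq_zero hN i (LinearMap.ker p) e'
  let Z : Submodule R F := I ^ c • LinearMap.ker p
  have hZ : Z ≤ LinearMap.ker p := Submodule.smul_le_right
  have kills : I ^ (c + a) ≤ Module.annihilator R (F ⧸ Z) := by
    have h : I ^ (c + a) • (⊤ : Submodule R F) ≤ Z := by
      rw [pow_add, mul_smul]
      refine smul_mono_right _ (Submodule.smul_le.2 fun r hr y _ => ?_)
      rw [LinearMap.mem_ker, map_smul, Module.mem_annihilator.1 (ha hr)]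
    rw [Submodule.annihilator_quotient]
    exact fun r hr => Submodule.mem_colon.2 fun y _ => h (Submodule.smul_mem_smul hr trivial)
  have surj : Function.Surjective (Z.liftQ p hZ) := by
    rw [← LinearMap.range_eq_top, Submodule.range_liftQ, LinearMap.range_eq_top.2 hp]
  refine ⟨ModuleCat.of R (F ⧸ Z), ModuleCat.ofHom (Z.liftQ p hZ), ⟨inferInstance, c + a, kills⟩,
    (ModuleCat.epi_iff_surjective _).2 surj, ?_⟩
  refine mk₀_comp_extClass_comp_eq_zero Z.mkQ_surjective hp (α := LinearMap.id)
    (Z.liftQ_mkQ p hZ).symm ?_ hc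
  rw [Z.ker_mkQ, Submodule.map_id, Submodule.map_smul'', Submodule.map_subtype_top]

lemma IsEffaceable.of_mk₀_comp {L L' Y : ModuleCat.{u} R} {j : ℕ} {e : Ext L Y j} (π : L' ⟶ L)
    [Epi π] (h : IsEffaceable I ((Ext.mk₀ π).comp e (zero_add j))) : IsEffaceable I e := by
  obtain ⟨L'', π', hL'', _, h0⟩ := h
  exact ⟨L'', π' ≫ π, hL'', inferInstance, by rw [← Ext.mk₀_comp_mk₀_assoc, h0]⟩

lemma ExtEffaceable.isEffaceable_of_comp_f_eq_zero {S : ShortComplex (ModuleCat.{u} R)}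
    (hS : S.ShortExact) {j : ℕ} (h : ExtEffaceable I S.X₃ j) {L : ModuleCat.{u} R}
    (hL : finitePowTorsion I L) {e : Ext L S.X₁ (j + 1)}
    (he : e.comp (Ext.mk₀ S.f) (add_zero (j + 1)) = 0) : IsEffaceable I e := by
  obtain ⟨e', rfl⟩ := Ext.covariant_sequence_exact₁ L hS e he rfl
  obtain ⟨L', π, hL', hπ, h0⟩ := h L e' hL
  refine ⟨L', π, hL', hπ, ?_⟩
  rw [← Ext.comp_assoc (a₁₂ := j) _ _ _ (by lia) (by lia) (by lia), h0, Ext.zero_comp]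

lemma smul_ext_eq_zero {L Y : ModuleCat.{u} R} {j : ℕ} {r : R}
    (hr : r ∈ Module.annihilator R L) (e : Ext L Y j) : r • e = 0 := by
  have h0 : r • 𝟙 L = 0 := by
    ext y
    exact Module.mem_annihilator.1 hr y
  rw [← Ext.mk₀_id_comp e, ← Ext.smul_comp, ← Ext.mk₀_smul, h0, Ext.mk₀_zero, Ext.zero_comp]

lemma ExtEffaceable.of_quotSMulTop {N : Type u} [AddCommGroup N] [Module R N] {x : R} (hx : x ∈ I)
    (hxN : IsSMulRegular N x) {j : ℕ} (h : ExtEffaceable I (ModuleCat.of R (QuotSMulTop x N)) j) :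
    ExtEffaceable I (ModuleCat.of R N) (j + 1) := by
  have of_smul_eq_zero {L : ModuleCat.{u} R} (hL : finitePowTorsion I L)
      {e : Ext L (ModuleCat.of R N) (j + 1)} (he : x • e = 0) : IsEffaceable I e := by
    refine h.isEffaceable_of_comp_f_eq_zero
      (IsSMulRegular.smulShortComplex_shortExact (M := ModuleCat.of R N) hxN) hL ?_
    change e.comp (Ext.mk₀ (x • 𝟙 (ModuleCat.of R N))) _ = 0
    rw [Ext.mk₀_smul, Ext.comp_smul, Ext.comp_mk₀_id, he]
  have of_pow_smul_eq_zero (a : ℕ) : ∀ {L : ModuleCat.{u} R}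
      {e : Ext L (ModuleCat.of R N) (j + 1)}, finitePowTorsion I L → x ^ a • e = 0 →
      IsEffaceable I e := by
    induction a with
    | zero =>
      intro L e hL he
      exact ⟨L, 𝟙 L, hL, inferInstance, by simpa using he⟩
    | succ a ih =>
      intro L e hL he
      obtain ⟨L', π, hL', _, hπ⟩ := ih (e := x • e) hL (by rwa [smul_smul, ← pow_succ])
      exact .of_mk₀_comp π (of_smul_eq_zero hL' (by rwa [← Ext.comp_smul]))
  rintro L e ⟨hL, a, ha⟩
  exact of_pow_smul_eq_zero a ⟨hL, a, ha⟩ (smul_ext_eq_zero (ha (Ideal.pow_mem_pow hx a)) e)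

lemma extEffaceable_of_isWeaklyRegular [IsNoetherianRing R] {rs : List R} (hI : ∀ x ∈ rs, x ∈ I)
    {N : Type u} [AddCommGroup N] [Module R N] (hN : IsWeaklyRegular N rs)
    (hI' : I ≤ Module.annihilator R (N ⧸ Ideal.ofList rs • (⊤ : Submodule R N))) (j : ℕ) :
    ExtEffaceable I (ModuleCat.of R N) (j + rs.length + 1) := by
  induction rs generalizing N with
  | nil =>
    let e : (N ⧸ Ideal.ofList ([] : List R) • (⊤ : Submodule R N)) ≃ₗ[R] N :=
      Submodule.quotEquivOfEqBot _ (by simp)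
    exact extEffaceable_succ_of_le_annihilator (e.annihilator_eq ▸ hI') j
  | cons x rs ih =>
    obtain ⟨hx, hrs⟩ := (isWeaklyRegular_cons_iff N x rs).1 hN
    let e := Submodule.quotOfListConsSMulTopEquivQuotSMulTopInner N x rs
    exact .of_quotSMulTop (hI x List.mem_cons_self) hx
      (ih (fun y hy => hI y (List.mem_cons_of_mem x hy)) hrs (e.annihilator_eq ▸ hI'))

end Effaceability

section Rigidity

variable {R : Type u} [CommRing R] [IsNoetherianRing R] [IsLocalRing R]

lemma subsingleton_ext_of_subsingleton_ext_residueField {Y L : ModuleCat.{u} R} {j : ℕ}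
    (h : Subsingleton (Ext (ModuleCat.of R (ResidueField R)) Y j))
    (hL : finitePowTorsion (maximalIdeal R) L) : Subsingleton (Ext L Y j) := by
  obtain ⟨hfin, a, ha⟩ := hL
  refine IsNoetherianRing.induction_on_isQuotientEquivQuotientPrime (A := R) (M := L) hfin
    (motive := fun L _ _ _ => maximalIdeal R ^ a ≤ Module.annihilator R L →
      Subsingleton (Ext (ModuleCat.of R L) Y j)) ?_ ?_ ?_ ha
  · intro L _ _ _ _ _
    have hL : Limits.IsZero (ModuleCat.of R L) := ModuleCat.isZero_of_subsingleton _
    exact subsingleton_ext_of_retract_left ⟨0, 0, hL.eq_of_src _ _⟩ h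
  · intro L _ _ _ p e hann
    rw [e.annihilator_eq, Ideal.annihilator_quotient] at hann
    have hp : p.1 = maximalIdeal R :=
      ((maximalIdeal.isMaximal R).eq_of_le p.2.ne_top (p.2.le_of_pow_le hann)).symm
    exact subsingleton_ext_of_retract_left
      (Retract.ofIso (e.trans (Submodule.quotEquivOfEq _ _ hp)).toModuleIso) h
  · intro A _ _ _ B _ _ _ C _ _ _ f g hf hg hfg hA hC hB
    have hS : (ModuleCat.shortComplexOfCompEqZero f g hfg.linearMap_comp_eq_zero).ShortExact :=
      ModuleCat.shortComplex_shortExact _ hfg hf hg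
    exact subsingleton_ext_X₂_left hS (hA (hB.trans (LinearMap.annihilator_le_of_injective f hf)))
      (hC (hB.trans (LinearMap.annihilator_le_of_surjective g hg)))

lemma subsingleton_ext_residueField_succ {Y : ModuleCat.{u} R} {j : ℕ}
    (hY : ExtEffaceable (maximalIdeal R) Y (j + 1))
    (h : Subsingleton (Ext (ModuleCat.of R (ResidueField R)) Y j)) :
    Subsingleton (Ext (ModuleCat.of R (ResidueField R)) Y (j + 1)) := by
  refine subsingleton_of_forall_eq 0 fun e => ?_
  obtain ⟨L, π, ⟨_, a, ha⟩, hπ, h0⟩ := hY _ e ⟨inferInstance, 1, by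
    rw [pow_one]
    exact Ideal.annihilator_quotient.ge⟩
  have hS := LinearMap.shortExact_shortComplexKer ((ModuleCat.epi_iff_surjective π).1 hπ)
  have hker : Subsingleton (Ext (ModuleCat.of R (LinearMap.ker π.hom)) Y j) :=
    subsingleton_ext_of_subsingleton_ext_residueField h
      ⟨inferInstance, a, ha.trans (LinearMap.annihilator_le_of_injective _
        (LinearMap.ker π.hom).injective_subtype)⟩
  obtain ⟨e', rfl⟩ := Ext.contravariant_sequence_exact₃ hS Y e h0 (add_comm 1 j)
  rw [hker.eq_zero e', Ext.comp_zero]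

theorem subsingleton_ext_residueField_of_le {N : Type u} [AddCommGroup N] [Module R N]
    {rs : List R} (hrs : ∀ x ∈ rs, x ∈ maximalIdeal R) (hN : IsWeaklyRegular N rs)
    (hann : maximalIdeal R ≤ Module.annihilator R (N ⧸ Ideal.ofList rs • (⊤ : Submodule R N)))
    {i j : ℕ} (hj : rs.length ≤ j) (hij : j ≤ i)
    (h : Subsingleton (Ext (ModuleCat.of R (ResidueField R)) (ModuleCat.of R N) j)) :
    Subsingleton (Ext (ModuleCat.of R (ResidueField R)) (ModuleCat.of R N) i) := by
  induction i, hij using Nat.le_induction with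
  | base => exact h
  | succ i hi ih =>
    have := extEffaceable_of_isWeaklyRegular hrs hN hann (i - rs.length)
    rw [Nat.sub_add_cancel (hj.trans hi)] at this
    exact subsingleton_ext_residueField_succ this ih

end Rigidity

section InjectiveDimension

variable {R : Type u} [CommRing R]

lemma injective_of_subsingleton_ext_quotient {Y : ModuleCat.{u} R}
    (h : ∀ I : Ideal R, Subsingleton (Ext (ModuleCat.of R (R ⧸ I)) Y 1)) : Injective Y := by
  refine (Module.injective_iff_injective_object R Y).1 (Module.Baer.injective fun I φ => ?_)
  have hI : (ModuleCat.shortComplexOfCompEqZero I.subtype I.mkQ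
      (LinearMap.exact_subtype_mkQ I).linearMap_comp_eq_zero).ShortExact :=
    ModuleCat.shortComplex_shortExact _ (LinearMap.exact_subtype_mkQ I) I.injective_subtype
      I.mkQ_surjective
  obtain ⟨ψ, hψ⟩ := exists_extension_of_subsingleton_ext_one hI (h I) (ModuleCat.ofHom φ)
  exact ⟨ψ.hom, fun x hx => ConcreteCategory.congr_hom hψ (⟨x, hx⟩ : I)⟩

lemma hasInjectiveDimensionLT_of_subsingleton_ext_quotient {n : ℕ} {Y : ModuleCat.{u} R}
    (h : ∀ I : Ideal R, Subsingleton (Ext (ModuleCat.of R (R ⧸ I)) Y (n + 1))) :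
    HasInjectiveDimensionLT Y (n + 1) := by
  induction n generalizing Y with
  | zero =>
    exact (injective_iff_hasInjectiveDimensionLT_one).1 (injective_of_subsingleton_ext_quotient h)
  | succ n ih =>
    let S : ShortComplex (ModuleCat.{u} R) := .mk _ _ (Limits.cokernel.condition (Injective.ι Y))
    have hS : S.ShortExact := { exact := ShortComplex.exact_cokernel _ }
    have hX₂ : Injective S.X₂ := inferInstanceAs (Injective (Injective.under Y))
    refine (hS.hasInjectiveDimensionLT_X₃_iff n hX₂).1 (ih fun I => ?_)
    have hinj : HasInjectiveDimensionLT S.X₂ 1 := (injective_iff_hasInjectiveDimensionLT_one).1 hX₂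
    exact subsingleton_ext_X₃_right hS (hinj.subsingleton _ _ _ (by lia) _) (h I)

end InjectiveDimension

namespace IsUlrich

variable {R : Type} [CommRing R] [IsLocalRing R] {M : Type} [AddCommGroup M] [Module R M]
  {s n : ℕ}

lemma exists_isWeaklyRegular (hM : IsUlrich R M s) :
    ∃ rs : List R, rs.length = s ∧ (∀ x ∈ rs, x ∈ maximalIdeal R) ∧ IsWeaklyRegular M rs ∧
      Nontrivial (M ⧸ (Ideal.ofList rs • ⊤ : Submodule R M)) ∧
      maximalIdeal R ≤ Module.annihilator R (M ⧸ (Ideal.ofList rs • ⊤ : Submodule R M)) := by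
  obtain ⟨-, -, -, rs, hlen, hmem, hreg, hrs⟩ := hM
  refine ⟨rs, hlen, hmem, hreg.toIsWeaklyRegular,
    Submodule.Quotient.nontrivial_iff.2 hreg.top_ne_smul.symm, fun r hr => ?_⟩
  rw [Submodule.annihilator_quotient, Submodule.mem_colon, ← hrs]
  exact fun m _ => Submodule.smul_mem_smul hr trivial

lemma subsingleton_ext_residueField_left (hM : IsUlrich R M s) {Y : ModuleCat R}
    (h : ∀ i, n ≤ i → i ≤ n + s → Subsingleton (Ext (ModuleCat.of R M) Y i)) :
    Subsingleton (Ext (ModuleCat.of R (ResidueField R)) Y (n + s)) := by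
  obtain ⟨rs, rfl, -, hreg, _, hann⟩ := hM.exists_isWeaklyRegular
  obtain ⟨r⟩ := nonempty_retract_residueField hann
  exact subsingleton_ext_of_retract_left r (subsingleton_ext_quotient_left hreg h)

lemma subsingleton_ext_residueField_right (hM : IsUlrich R M s) {X : ModuleCat R}
    (h : ∀ i, n ≤ i → i ≤ n + s → Subsingleton (Ext X (.of R M) i)) :
    Subsingleton (Ext X (.of R (ResidueField R)) n) := by
  obtain ⟨rs, rfl, -, hreg, _, hann⟩ := hM.exists_isWeaklyRegular
  obtain ⟨r⟩ := nonempty_retract_residueField hann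
  exact subsingleton_ext_of_retract_right r (subsingleton_ext_quotient_right hreg h)

variable [IsNoetherianRing R]

theorem isRegularLocalRing_of_hasProjectiveDimensionLT (hM : IsUlrich R M s)
    (h : HasProjectiveDimensionLT (ModuleCat.of R M) n) : IsRegularLocalRing R :=
  isRegularLocalRing_of_subsingleton_ext_residueField <|
    hM.subsingleton_ext_residueField_left fun i hi _ => h.subsingleton _ n i hi _

theorem isRegularLocalRing_of_hasInjectiveDimensionLT (hM : IsUlrich R M s)
    (h : HasInjectiveDimensionLT (ModuleCat.of R M) n) : IsRegularLocalRing R :=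
  isRegularLocalRing_of_subsingleton_ext_residueField <|
    hM.subsingleton_ext_residueField_right fun i hi _ => h.subsingleton _ n i hi _

theorem isRegularLocal_iff_injDimFinite (hM : IsUlrich R M s) :
    IsRegularLocal R ↔ InjDimFinite R M := by
  rw [isRegularLocal_iff_isRegularLocalRing, injDimFinite_iff]
  refine ⟨fun _ => ?_, fun ⟨_, h⟩ => hM.isRegularLocalRing_of_hasInjectiveDimensionLT h⟩
  obtain ⟨d, hd⟩ := exists_forall_hasProjectiveDimensionLT R
  exact ⟨d + 1, hasInjectiveDimensionLT_of_subsingleton_ext_quotient fun I =>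
    (hd (R ⧸ I)).subsingleton _ _ _ le_rfl _⟩

theorem isRegularLocal_iff_projDimFinite [Module.Finite R M] (hM : IsUlrich R M s) :
    IsRegularLocal R ↔ ProjDimFinite R M := by
  rw [isRegularLocal_iff_isRegularLocalRing, projDimFinite_iff]
  refine ⟨fun _ => ?_, fun ⟨_, h⟩ => hM.isRegularLocalRing_of_hasProjectiveDimensionLT h⟩
  obtain ⟨d, hd⟩ := exists_forall_hasProjectiveDimensionLT R
  exact ⟨d + 1, hd M⟩

protected theorem isRegularLocalRing_of_subsingleton_ext_residueField [Module.Finite R M]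
    (hM : IsUlrich R M s)
    (h : Subsingleton (Ext (ModuleCat.of R M) (.of R (ResidueField R)) n)) : IsRegularLocalRing R :=
  hM.isRegularLocalRing_of_hasProjectiveDimensionLT
    (hasProjectiveDimensionLT_of_subsingleton_ext_residueField M h)

variable {N : Type} [AddCommGroup N] [Module R N] {t : ℕ}

theorem isRegularLocalRing_of_subsingleton_ext [Module.Finite R M] (hM : IsUlrich R M s)
    (hN : IsUlrich R N t) (hn : t ≤ n + s)
    (h : ∀ i, n ≤ i → i ≤ n + min s t → Subsingleton (Ext (ModuleCat.of R M) (.of R N) i)) :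
    IsRegularLocalRing R := by
  rcases le_total s t with hst | hts
  · rw [min_eq_left hst] at h
    have hk : Subsingleton (Ext (ModuleCat.of R (ResidueField R)) (.of R N) (n + s)) :=
      hM.subsingleton_ext_residueField_left h
    obtain ⟨rs, rfl, hmem, hreg, -, hann⟩ := hN.exists_isWeaklyRegular
    exact isRegularLocalRing_of_subsingleton_ext_residueField <|
      hN.subsingleton_ext_residueField_right fun i hi _ =>
        subsingleton_ext_residueField_of_le hmem hreg hann hn hi hk
  · rw [min_eq_right hts] at h
    exact hM.isRegularLocalRing_of_subsingleton_ext_residueField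
      (hN.subsingleton_ext_residueField_right h)

theorem isRegularLocalRing_of_subsingleton_ext_characterModule [Module.Finite R N]
    (hM : IsUlrich R M s) (hN : IsUlrich R N t) (h : ∀ i, n ≤ i → i ≤ n + s →
      Subsingleton (Ext (ModuleCat.of R M) (.of R (CharacterModule N)) (i + 1))) :
    IsRegularLocalRing R := by
  have hk : Subsingleton
      (Ext (ModuleCat.of R (ResidueField R)) (.of R (CharacterModule N)) (n + 1 + s)) :=
    hM.subsingleton_ext_residueField_left fun i hi his => by
      obtain ⟨j, rfl⟩ := Nat.exists_eq_add_of_le' (Nat.one_le_of_lt hi)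
      exact h j (by lia) (by lia)
  rw [Nat.add_right_comm] at hk
  exact hN.isRegularLocalRing_of_subsingleton_ext_residueField
    (subsingleton_ext_residueField_of_characterModule hk)

theorem isRegularLocal_iff_extVanish [Module.Finite R M] (hM : IsUlrich R M s)
    (hN : IsUlrich R N t) :
    IsRegularLocal R ↔ ∃ n : ℕ, 1 ≤ n ∧ depth R N ≤ ((n + s : ℕ) : ℕ∞) ∧
      ∀ i : ℕ, n ≤ i → i ≤ n + min s t → ExtVanish R M N i := by
  rw [isRegularLocal_iff_isRegularLocalRing, hN.2.2.1]
  constructor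
  · intro _
    obtain ⟨d, hd⟩ := exists_forall_hasProjectiveDimensionLT R
    refine ⟨d + t + 1, by lia, by exact_mod_cast (by lia : t ≤ d + t + 1 + s), fun i hi _ => ?_⟩
    obtain ⟨j, rfl⟩ := Nat.exists_eq_add_of_le' (Nat.one_le_of_lt hi)
    exact extVanish_succ_iff.2 ((hd M).subsingleton _ _ _ (by lia) _)
  · rintro ⟨n, hn, hdepth, h⟩
    refine hM.isRegularLocalRing_of_subsingleton_ext hN (by exact_mod_cast hdepth)
      fun i hi his => ?_
    obtain ⟨j, rfl⟩ := Nat.exists_eq_add_of_le' (hn.trans hi)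
    exact extVanish_succ_iff.1 (h _ hi his)

theorem isRegularLocal_iff_torVanish [Module.Finite R M] [Module.Finite R N]
    (hM : IsUlrich R M s) (hN : IsUlrich R N t) :
    IsRegularLocal R ↔ ∃ n : ℕ, 1 ≤ n ∧
      ∀ i : ℕ, n ≤ i → i ≤ n + min s t → TorVanish R M N i := by
  rw [isRegularLocal_iff_isRegularLocalRing]
  constructor
  · intro _
    obtain ⟨d, hd⟩ := exists_forall_hasProjectiveDimensionLT R
    refine ⟨d + 1, by lia, fun i hi _ => ?_⟩
    obtain ⟨j, rfl⟩ := Nat.exists_eq_add_of_le' (Nat.one_le_of_lt hi)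
    exact torVanish_succ_iff.2 ((hd N).subsingleton _ _ _ hi _)
  · rintro ⟨_, hn, h⟩
    obtain ⟨n, rfl⟩ := Nat.exists_eq_add_of_le' hn
    have hNM : ∀ i, n ≤ i → i ≤ n + min s t →
        Subsingleton (Ext (ModuleCat.of R N) (.of R (CharacterModule M)) (i + 1)) := fun i hi his =>
      torVanish_succ_iff.1 (h (i + 1) (by lia) (by lia))
    rcases le_total s t with hst | hts
    · exact hM.isRegularLocalRing_of_subsingleton_ext_characterModule hN fun i hi his =>
        subsingleton_ext_characterModule_comm.1 (hNM i hi (by lia))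
    · exact hN.isRegularLocalRing_of_subsingleton_ext_characterModule hM fun i hi his =>
        hNM i hi (by lia)

end IsUlrich

theorem statement10 (R : Type) [CommRing R] [IsNoetherianRing R] [IsLocalRing R]
    (M : Type) [AddCommGroup M] [Module R M] [Module.Finite R M]
    (N : Type) [AddCommGroup N] [Module R N] [Module.Finite R N]
    (sM sN : ℕ) (hM : IsUlrich R M sM) (hN : IsUlrich R N sN) :
    (IsRegularLocal R ↔ ProjDimFinite R M) ∧
    (IsRegularLocal R ↔ InjDimFinite R N) ∧
    (IsRegularLocal R ↔ (∃ n : ℕ, 1 ≤ n ∧ depth R N ≤ ((n + sM : ℕ) : ℕ∞) ∧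
      ∀ i : ℕ, n ≤ i → i ≤ n + min sM sN → ExtVanish R M N i)) ∧
    (IsRegularLocal R ↔ (∃ n : ℕ, 1 ≤ n ∧
      ∀ i : ℕ, n ≤ i → i ≤ n + min sM sN → TorVanish R M N i)) :=
  ⟨hM.isRegularLocal_iff_projDimFinite, hN.isRegularLocal_iff_injDimFinite,
    hM.isRegularLocal_iff_extVanish hN, hM.isRegularLocal_iff_torVanish hN⟩
end

section
/- Let (R, m, k) be a Cohen–Macaulay commutative Noetherian local ring and let M be an Ulrich R-module. For a finitely generated R-module X, let β_n(X) = dim_k Tor_n^R(X, k) denote its n-th Betti number. Then M has maximal complexity and maximal curvature: (i) limsup_{n→∞} β_n(M)^{1/n} = limsup_{n→∞} β_n(k)^{1/n}; and (ii) for every integer b ≥ 0, there exist a real number α > 0 and an integer N such that β_n(M) ≤ α·n^{b−1} for all n ≥ N if and only if there exist a real number α' > 0 and an integer N' such that β_n(k) ≤ α'·n^{b−1} for all n ≥ N'. -/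
open CategoryTheory IsLocalRing

/-!
If `mM = 0`, then `M` is a nonzero finite power of `k`, so its Betti numbers are a constant multiple
of those of `k`. An `M`-regular element `x ∈ m` acts as zero on `Tor(-, k)`, so the long exact
sequence of `0 → M → M → M / xM → 0` breaks up and gives
`β_{n+1}(M / xM) = β_{n+1}(M) + β_n(M)`. Hence, for a comparison function `h` with
`h n = O(h (n + 1))`, we have `β(M) = O(h)` if and only if `β(M / xM) = O(h)`. For an Ulrich module,
dividing by the regular sequence therefore reduces to the first case. Complexity is read off from
`h n = n ^ (b - 1)` and curvature from `h n = a ^ n` with `a > 0`.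
-/

section LeftDerived

variable {C D : Type*} [Category* C] [Category* D]

instance homologyFunctor_linear {k ι : Type*} [Ring k] [Preadditive D] [Linear k D]
    [CategoryWithHomology D] (c : ComplexShape ι) (i : ι) :
    (HomologicalComplex.homologyFunctor D c i).Linear k where
  map_smul φ r := ShortComplex.homologyMap_smul
    (φ := (HomologicalComplex.shortComplexFunctor D c i).map φ) (a := r)

instance mapHomologicalComplex_linear {k ι : Type*} [Ring k] [Preadditive C] [Preadditive D]
    [Linear k C] [Linear k D] (F : C ⥤ D) [F.Additive] [F.Linear k] (c : ComplexShape ι) :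
    (F.mapHomologicalComplex c).Linear k where
  map_smul φ r := by
    ext i
    exact Functor.Linear.map_smul (φ.f i) r

variable [Abelian C] [HasProjectiveResolutions C] [Abelian D]

instance leftDerived_linear {k : Type*} [Ring k] [Linear k C] [Linear k D]
    (F : C ⥤ D) [F.Additive] [F.Linear k] (n : ℕ) : (F.leftDerived n).Linear k where
  map_smul {X Y} f r := by
    let P := projectiveResolution X
    let Q := projectiveResolution Y
    let g := ProjectiveResolution.lift f P Q
    have hg : g ≫ Q.π = P.π ≫ (ChainComplex.single₀ C).map f :=
      ProjectiveResolution.lift_commutes f P Q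
    have hrg : (r • g) ≫ Q.π = P.π ≫ (ChainComplex.single₀ C).map (r • f) := by
      rw [Linear.smul_comp, hg, ← Linear.comp_smul]
      congr 1
      ext
      simp only [HomologicalComplex.smul_f_apply, ChainComplex.single₀_map_f_zero]
      rfl
    rw [F.leftDerived_map_eq n f g hg, F.leftDerived_map_eq n (r • f) (r • g) hrg,
      Functor.map_smul, Linear.smul_comp, Linear.comp_smul]

variable {F G : C ⥤ D} [F.Additive] [G.Additive]

lemma natTrans_leftDerived_add (α β : F ⟶ G) (n : ℕ) :
    NatTrans.leftDerived (α + β) n = NatTrans.leftDerived α n + NatTrans.leftDerived β n := by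
  ext X
  have hadd (K : ChainComplex C ℕ) : (NatTrans.mapHomologicalComplex (α + β) _).app K =
      (NatTrans.mapHomologicalComplex α _).app K + (NatTrans.mapHomologicalComplex β _).app K := rfl
  rw [NatTrans.app_add]
  simp only [ProjectiveResolution.leftDerived_app_eq _ (projectiveResolution X), hadd,
    Functor.map_add, Preadditive.add_comp, Preadditive.comp_add]

lemma natTrans_leftDerived_smul {k : Type*} [Ring k] [Linear k D] (r : k) (α : F ⟶ G) (n : ℕ) :
    NatTrans.leftDerived (r • α) n = r • NatTrans.leftDerived α n := by
  ext X
  have hsmul (K : ChainComplex C ℕ) : (NatTrans.mapHomologicalComplex (r • α) _).app K =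
      r • (NatTrans.mapHomologicalComplex α _).app K := rfl
  rw [NatTrans.app_smul]
  simp only [ProjectiveResolution.leftDerived_app_eq _ (projectiveResolution X), hsmul,
    Functor.map_smul, Linear.smul_comp, Linear.comp_smul]

lemma isZero_leftDerived_succ_of_exact (F : C ⥤ D) [F.Additive] [Limits.PreservesFiniteLimits F]
    [Limits.PreservesFiniteColimits F] (X : C) (n : ℕ) :
    Limits.IsZero ((F.leftDerived (n + 1)).obj X) := by
  let P := projectiveResolution X
  refine .of_iso ?_ (P.isoLeftDerivedObj F (n + 1))
  refine (HomologicalComplex.exactAt_iff_isZero_homology _ _).1 ?_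
  exact (P.complex_exactAt_succ n).map F

end LeftDerived

section LongExactSequence

lemma exists_exact_of_iso {D : Type*} [Category* D] [Limits.HasZeroMorphisms D]
    {S : ShortComplex D} (hS : S.Exact) {X₁ X₂ X₃ : D} {f : X₁ ⟶ X₂} {g : X₂ ⟶ X₃}
    (e₁ : X₁ ≅ S.X₁) (e₂ : X₂ ≅ S.X₂) (e₃ : X₃ ≅ S.X₃)
    (hf : e₁.inv ≫ f = S.f ≫ e₂.inv) (hg : e₂.inv ≫ g = S.g ≫ e₃.inv) :
    ∃ w, (ShortComplex.mk f g w).Exact := by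
  have w : f ≫ g = 0 := by
    rw [← cancel_epi e₁.inv, reassoc_of% hf, hg, S.zero_assoc, Limits.zero_comp, Limits.comp_zero]
  exact ⟨w, ShortComplex.exact_of_iso (ShortComplex.isoMk e₁.symm e₂.symm e₃.symm hf hg) hS⟩

variable {C D : Type*} [Category* C] [Category* D] [Abelian C] [Abelian D]

/-- The isomorphism computing a left derived functor as the homology of the image of the chosen
projective resolution. -/
noncomputable def leftDerivedIsoHomology [HasProjectiveResolutions C] (F : C ⥤ D) [F.Additive]
    (X : C) (n : ℕ) :
    (F.leftDerived n).obj X ≅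
      ((F.mapHomologicalComplex (ComplexShape.down ℕ)).obj
        (projectiveResolution X).complex).homology n :=
  (projectiveResolution X).isoLeftDerivedObj F n

variable {S : ShortComplex (C ⥤ D)} [S.X₁.Additive] [S.X₂.Additive] [S.X₃.Additive]

variable (S) in
/-- The short complex of chain complexes obtained by evaluating a short complex of additive
functors on a chain complex. -/
def mapChainComplex (K : ChainComplex C ℕ) : ShortComplex (ChainComplex D ℕ) where
  X₁ := (S.X₁.mapHomologicalComplex _).obj K
  X₂ := (S.X₂.mapHomologicalComplex _).obj K
  X₃ := (S.X₃.mapHomologicalComplex _).obj K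
  f := (NatTrans.mapHomologicalComplex S.f _).app K
  g := (NatTrans.mapHomologicalComplex S.g _).app K
  zero := by
    ext i : 1
    exact NatTrans.congr_app S.zero (K.X i)

lemma mapChainComplex_shortExact
    (hS : ∀ (P : C) [Projective P], (S.map ((evaluation C D).obj P)).ShortExact)
    (K : ChainComplex C ℕ) [∀ i, Projective (K.X i)] : (mapChainComplex S K).ShortExact :=
  HomologicalComplex.shortExact_of_degreewise_shortExact _ fun i ↦ hS (K.X i)

variable [HasProjectiveResolutions C]

lemma leftDerivedIsoHomology_inv_naturality {F G : C ⥤ D} [F.Additive] [G.Additive] (α : F ⟶ G)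
    (X : C) (n : ℕ) :
    (leftDerivedIsoHomology F X n).inv ≫ (NatTrans.leftDerived α n).app X =
      HomologicalComplex.homologyMap ((NatTrans.mapHomologicalComplex α _).app
        (projectiveResolution X).complex) n ≫ (leftDerivedIsoHomology G X n).inv := by
  rw [Iso.inv_comp_eq]
  exact (projectiveResolution X).leftDerived_app_eq α n

variable (hS : ∀ (P : C) [Projective P], (S.map ((evaluation C D).obj P)).ShortExact)
  (X : C) (n : ℕ)

/-- The connecting morphism of the long exact sequence of left derived functors attached to a
sequence of additive functors which is short exact on projective objects. -/
noncomputable def leftDerivedδ :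
    (S.X₃.leftDerived (n + 1)).obj X ⟶ (S.X₁.leftDerived n).obj X :=
  (leftDerivedIsoHomology S.X₃ X (n + 1)).hom ≫
    (mapChainComplex_shortExact hS (projectiveResolution X).complex).δ (n + 1) n rfl ≫
      (leftDerivedIsoHomology S.X₁ X n).inv

lemma leftDerivedIsoHomology_inv_comp_δ :
    (leftDerivedIsoHomology S.X₃ X (n + 1)).inv ≫ leftDerivedδ hS X n =
      (mapChainComplex_shortExact hS (projectiveResolution X).complex).δ (n + 1) n rfl ≫
        (leftDerivedIsoHomology S.X₁ X n).inv :=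
  Iso.inv_hom_id_assoc _ _

theorem leftDerived_exact₁ :
    ∃ w, (ShortComplex.mk (leftDerivedδ hS X n) ((NatTrans.leftDerived S.f n).app X) w).Exact :=
  exists_exact_of_iso
    ((mapChainComplex_shortExact hS (projectiveResolution X).complex).homology_exact₁ (n + 1) n rfl)
    (leftDerivedIsoHomology S.X₃ X (n + 1)) (leftDerivedIsoHomology S.X₁ X n)
    (leftDerivedIsoHomology S.X₂ X n) (leftDerivedIsoHomology_inv_comp_δ hS X n)
    (leftDerivedIsoHomology_inv_naturality S.f X n)

include hS in
theorem leftDerived_exact₂ :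
    ∃ w, (ShortComplex.mk ((NatTrans.leftDerived S.f n).app X)
      ((NatTrans.leftDerived S.g n).app X) w).Exact :=
  exists_exact_of_iso
    ((mapChainComplex_shortExact hS (projectiveResolution X).complex).homology_exact₂ n)
    (leftDerivedIsoHomology S.X₁ X n) (leftDerivedIsoHomology S.X₂ X n)
    (leftDerivedIsoHomology S.X₃ X n) (leftDerivedIsoHomology_inv_naturality S.f X n)
    (leftDerivedIsoHomology_inv_naturality S.g X n)

theorem leftDerived_exact₃ :
    ∃ w, (ShortComplex.mk ((NatTrans.leftDerived S.g (n + 1)).app X)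
      (leftDerivedδ hS X n) w).Exact :=
  exists_exact_of_iso
    ((mapChainComplex_shortExact hS (projectiveResolution X).complex).homology_exact₃ (n + 1) n rfl)
    (leftDerivedIsoHomology S.X₂ X (n + 1)) (leftDerivedIsoHomology S.X₃ X (n + 1))
    (leftDerivedIsoHomology S.X₁ X n) (leftDerivedIsoHomology_inv_naturality S.g X (n + 1))
    (leftDerivedIsoHomology_inv_comp_δ hS X n)

end LongExactSequence

section TorModule

open MonoidalCategory

universe u

variable {R : Type u} [CommRing R]

instance tor_additive (n : ℕ) : (Tor (ModuleCat.{u} R) n).Additive where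
  map_add {_ _ f g} := by
    rw [Tor_map, CategoryTheory.Functor.map_add, natTrans_leftDerived_add]
    rfl

instance tor_linear (n : ℕ) : (Tor (ModuleCat.{u} R) n).Linear R where
  map_smul f r := by
    have : (tensoringLeft (ModuleCat R)).map (r • f) = r • (tensoringLeft (ModuleCat R)).map f :=
      NatTrans.ext (funext (MonoidalLinear.smul_whiskerRight r f))
    rw [Tor_map, this, natTrans_leftDerived_smul]
    rfl

instance tor_obj_linear (n : ℕ) (M : ModuleCat.{u} R) :
    ((Tor (ModuleCat R) n).obj M).Linear R :=
  leftDerived_linear (tensorLeft M) n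

instance tor_flip_obj_additive (n : ℕ) (N : ModuleCat.{u} R) :
    ((Tor (ModuleCat R) n).flip.obj N).Additive where
  map_add {_ _ f g} := NatTrans.congr_app ((Tor (ModuleCat R) n).map_add (f := f) (g := g)) N

/-- Tor commutes with finite powers in the first variable. -/
noncomputable def torPiEquiv (ι : Type) [Finite ι] (M : Type u) [AddCommGroup M] [Module R M]
    (N : ModuleCat.{u} R) (n : ℕ) :
    ((Tor (ModuleCat R) n).obj (ModuleCat.of R (ι → M))).obj N ≃ₗ[R]
      (ι → ((Tor (ModuleCat R) n).obj (ModuleCat.of R M)).obj N) :=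
  let F : ModuleCat.{u} R ⥤ ModuleCat.{u} R := (Tor (ModuleCat R) n).flip.obj N
  (F.mapIso (ModuleCat.biproductIsoPi fun _ : ι ↦ ModuleCat.of R M).symm ≪≫
    F.mapBiproduct _ ≪≫ ModuleCat.biproductIsoPi _).toLinearEquiv

variable {N : ModuleCat.{u} R} {r : R}

lemma tor_smul_id_eq_zero (hr : ∀ y : N, r • y = 0) (n : ℕ) (M : ModuleCat.{u} R) :
    r • 𝟙 (((Tor (ModuleCat R) n).obj M).obj N) = 0 := by
  have hN : r • 𝟙 N = (0 : R) • 𝟙 N := by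
    ext y
    exact (hr y).trans (zero_smul R y).symm
  rw [← CategoryTheory.Functor.map_id, ← CategoryTheory.Functor.map_smul, hN,
    CategoryTheory.Functor.map_smul, zero_smul]

lemma tor_map_smul_id_app_eq_zero (hr : ∀ y : N, r • y = 0) (n : ℕ) (M : ModuleCat.{u} R) :
    ((Tor (ModuleCat R) n).map (r • 𝟙 M)).app N = 0 := by
  rw [CategoryTheory.Functor.map_smul, CategoryTheory.Functor.map_id, NatTrans.app_smul,
    NatTrans.id_app, tor_smul_id_eq_zero hr]

lemma isZero_tor_succ_of_flat (M N : ModuleCat.{u} R) [Module.Flat R M] (n : ℕ) :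
    Limits.IsZero (((Tor (ModuleCat R) (n + 1)).obj M).obj N) :=
  isZero_leftDerived_succ_of_exact (tensorLeft M) N n

section

variable {S : ShortComplex (ModuleCat.{u} R)} (hS : S.ShortExact)

instance : (S.map (tensoringLeft (ModuleCat R))).X₁.Additive :=
  inferInstanceAs (tensorLeft S.X₁).Additive

instance : (S.map (tensoringLeft (ModuleCat R))).X₂.Additive :=
  inferInstanceAs (tensorLeft S.X₂).Additive

instance : (S.map (tensoringLeft (ModuleCat R))).X₃.Additive :=
  inferInstanceAs (tensorLeft S.X₃).Additive

include hS in
lemma map_tensoringLeft_shortExact (P : ModuleCat.{u} R) [Projective P] :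
    ((S.map (tensoringLeft (ModuleCat R))).map ((evaluation _ _).obj P)).ShortExact := by
  have : Module.Projective R P := (IsProjective.iff_projective P).2 ‹_›
  exact hS.map_of_exact (tensorRight P)

/-- The connecting homomorphism of the long exact sequence of Tor in the first variable. -/
noncomputable def torδ (N : ModuleCat.{u} R) (n : ℕ) :
    ((Tor (ModuleCat R) (n + 1)).obj S.X₃).obj N ⟶ ((Tor (ModuleCat R) n).obj S.X₁).obj N :=
  leftDerivedδ (S := S.map (tensoringLeft (ModuleCat R)))
    (fun P _ ↦ map_tensoringLeft_shortExact hS P) N n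

theorem tor_exact₁ (N : ModuleCat.{u} R) (n : ℕ) :
    ∃ w, (ShortComplex.mk (torδ hS N n) (((Tor (ModuleCat R) n).map S.f).app N) w).Exact :=
  leftDerived_exact₁ (S := S.map (tensoringLeft (ModuleCat R)))
    (fun P _ ↦ map_tensoringLeft_shortExact hS P) N n

include hS in
theorem tor_exact₂ (N : ModuleCat.{u} R) (n : ℕ) :
    ∃ w, (ShortComplex.mk (((Tor (ModuleCat R) n).map S.f).app N)
      (((Tor (ModuleCat R) n).map S.g).app N) w).Exact :=
  leftDerived_exact₂ (S := S.map (tensoringLeft (ModuleCat R)))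
    (fun P _ ↦ map_tensoringLeft_shortExact hS P) N n

theorem tor_exact₃ (N : ModuleCat.{u} R) (n : ℕ) :
    ∃ w, (ShortComplex.mk (((Tor (ModuleCat R) (n + 1)).map S.g).app N) (torδ hS N n) w).Exact :=
  leftDerived_exact₃ (S := S.map (tensoringLeft (ModuleCat R)))
    (fun P _ ↦ map_tensoringLeft_shortExact hS P) N n

end

theorem tor_smulShortComplex_shortExact (hr : ∀ y : N, r • y = 0) (M : ModuleCat.{u} R)
    (hM : IsSMulRegular M r) (n : ℕ) :
    ∃ w, (ShortComplex.mk
      (((Tor (ModuleCat R) (n + 1)).map (ModuleCat.smulShortComplex M r).g).app N)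
      (torδ hM.smulShortComplex_shortExact N n) w).ShortExact := by
  have hzero (i : ℕ) :
      ((Tor (ModuleCat R) i).map (ModuleCat.smulShortComplex M r).f).app N = 0 := by
    rw [ModuleCat.smulShortComplex_f_eq_smul_id]
    exact tor_map_smul_id_app_eq_zero hr i M
  obtain ⟨_, h₁⟩ := tor_exact₁ hM.smulShortComplex_shortExact N n
  obtain ⟨_, h₂⟩ := tor_exact₂ hM.smulShortComplex_shortExact N (n + 1)
  obtain ⟨w, h₃⟩ := tor_exact₃ hM.smulShortComplex_shortExact N n
  exact ⟨w, { exact := h₃, mono_f := h₂.mono_g (hzero (n + 1)), epi_g := h₁.epi_f (hzero n) }⟩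

lemma finite_tor_zero (M N : ModuleCat.{u} R) [Module.Finite R M] [Module.Finite R N] :
    Module.Finite R (((Tor (ModuleCat R) 0).obj M).obj N) :=
  have : Module.Finite R ((tensorLeft M).obj N) :=
    inferInstanceAs (Module.Finite R (TensorProduct R M N))
  .equiv ((tensorLeft M).leftDerivedZeroIsoSelf.app N).toLinearEquiv.symm

theorem finite_tor [IsNoetherianRing R] (M N : ModuleCat.{u} R) [Module.Finite R M]
    [Module.Finite R N] (n : ℕ) : Module.Finite R (((Tor (ModuleCat R) n).obj M).obj N) := by
  induction n generalizing M with
  | zero => exact finite_tor_zero M N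
  | succ n ih =>
    obtain ⟨d, f, hf⟩ := Module.Finite.exists_fin' R M
    have hS := LinearMap.shortExact_shortComplexKer hf
    obtain ⟨_, hδ⟩ := tor_exact₃ hS N n
    have : Module.Flat R f.shortComplexKer.X₂ := inferInstanceAs (Module.Flat R (Fin d → R))
    have : Module.Finite R f.shortComplexKer.X₁ :=
      inferInstanceAs (Module.Finite R (LinearMap.ker f))
    have := ih f.shortComplexKer.X₁
    have hmono : Mono (torδ hS N n) :=
      hδ.mono_g ((isZero_tor_succ_of_flat f.shortComplexKer.X₂ N n).eq_of_src _ _)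
    exact Module.Finite.of_injective (torδ hS N n).hom
      ((ModuleCat.mono_iff_injective _).1 hmono)

end TorModule

section Betti

lemma smul_top_quotient_eq_bot {R M : Type*} [CommRing R] [AddCommGroup M] [Module R M]
    {I : Ideal R} {N : Submodule R M} (hN : I • (⊤ : Submodule R M) ≤ N) :
    I • (⊤ : Submodule R (M ⧸ N)) = ⊥ := by
  rw [← Submodule.range_mkQ, LinearMap.range_eq_map, ← Submodule.map_smul'', eq_bot_iff,
    Submodule.map_le_iff_le_comap]
  simpa using hN

section Length

variable {R : Type*} [CommRing R] [IsLocalRing R] {V : Type*} [AddCommGroup V] [Module R V]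

lemma length_eq_toENat_rank_of_maximalIdeal_smul_eq_bot
    (hV : maximalIdeal R • (⊤ : Submodule R V) = ⊥) :
    Module.length R V = (Module.rank (R ⧸ maximalIdeal R)
      (V ⧸ maximalIdeal R • (⊤ : Submodule R V))).toENat := by
  let _ : Field (R ⧸ maximalIdeal R) := Ideal.Quotient.field _
  rw [← (Submodule.quotEquivOfEqBot _ hV).length_eq, Module.length_eq_of_surjective
    (R := R ⧸ maximalIdeal R) Ideal.Quotient.mk_surjective, Module.length_eq_rank]

lemma length_ne_top_of_maximalIdeal_smul_eq_bot [Module.Finite R V]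
    (hV : maximalIdeal R • (⊤ : Submodule R V) = ⊥) : Module.length R V ≠ ⊤ := by
  let _ : Field (R ⧸ maximalIdeal R) := Ideal.Quotient.field _
  have : Module.Finite (R ⧸ maximalIdeal R) (V ⧸ maximalIdeal R • (⊤ : Submodule R V)) :=
    .of_restrictScalars_finite R _ _
  rw [length_eq_toENat_rank_of_maximalIdeal_smul_eq_bot hV]
  exact (Cardinal.toENat_lt_top.2 (Module.rank_lt_aleph0 _ _)).ne

lemma exists_linearEquiv_pi_of_maximalIdeal_smul_eq_bot [Nontrivial V] [Module.Finite R V]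
    (hV : maximalIdeal R • (⊤ : Submodule R V) = ⊥) :
    ∃ d : ℕ, d ≠ 0 ∧ Nonempty (V ≃ₗ[R] (Fin d → R ⧸ maximalIdeal R)) := by
  let _ : Field (R ⧸ maximalIdeal R) := Ideal.Quotient.field _
  have htors : Module.IsTorsionBySet R V (maximalIdeal R : Set R) := fun v a ↦
    (Submodule.eq_bot_iff _).1 hV _ (Submodule.smul_mem_smul a.2 trivial)
  let _ := htors.module
  have : IsScalarTower R (R ⧸ maximalIdeal R) V := htors.isScalarTower
  have : Module.Finite (R ⧸ maximalIdeal R) V := .of_restrictScalars_finite R _ _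
  exact ⟨Module.finrank (R ⧸ maximalIdeal R) V, Module.finrank_pos.ne',
    ⟨(Module.finBasis (R ⧸ maximalIdeal R) V).equivFun.restrictScalars R⟩⟩

end Length

variable {R : Type} [CommRing R] [IsLocalRing R] {M : Type} [AddCommGroup M] [Module R M]

lemma smul_residueField_eq_zero {r : R} (hr : r ∈ maximalIdeal R) (y : R ⧸ maximalIdeal R) :
    r • y = 0 := by
  rw [Algebra.smul_def, Ideal.Quotient.algebraMap_eq, Ideal.Quotient.eq_zero_iff_mem.2 hr, zero_mul]

lemma maximalIdeal_smul_tor_residueField_eq_bot (M : ModuleCat.{0} R) (n : ℕ) :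
    maximalIdeal R • (⊤ : Submodule R (((Tor (ModuleCat R) n).obj M).obj
      (ModuleCat.of R (R ⧸ maximalIdeal R)))) = ⊥ := by
  refine eq_bot_iff.2 (Submodule.smul_le.2 fun r hr t _ ↦ ?_)
  have h := tor_smul_id_eq_zero (N := ModuleCat.of R (R ⧸ maximalIdeal R))
    (smul_residueField_eq_zero hr) n M
  exact congr($(h).hom t)

variable (R M) in
lemma betti_eq_toNat_length (n : ℕ) :
    betti R M n = (Module.length R (((Tor (ModuleCat R) n).obj (ModuleCat.of R M)).obj
      (ModuleCat.of R (R ⧸ maximalIdeal R)))).toNat := by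
  rw [length_eq_toENat_rank_of_maximalIdeal_smul_eq_bot
    (maximalIdeal_smul_tor_residueField_eq_bot _ n)]
  rfl

lemma betti_congr {M' : Type} [AddCommGroup M'] [Module R M'] (e : M ≃ₗ[R] M') :
    betti R M = betti R M' := by
  ext n
  rw [betti_eq_toNat_length, betti_eq_toNat_length,
    (((Tor (ModuleCat R) n).mapIso e.toModuleIso).app _).toLinearEquiv.length_eq]

variable (R M) in
lemma betti_pi (d n : ℕ) : betti R (Fin d → M) n = d * betti R M n := by
  rw [betti_eq_toNat_length, (torPiEquiv (Fin d) M _ n).length_eq, Module.length_pi,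
    ENat.toNat_mul, betti_eq_toNat_length]
  simp

theorem betti_quotSMulTop_succ [IsNoetherianRing R] [Module.Finite R M] {x : R}
    (hx : x ∈ maximalIdeal R) (hreg : IsSMulRegular M x) (n : ℕ) :
    betti R (QuotSMulTop x M) (n + 1) = betti R M (n + 1) + betti R M n := by
  have hfin (i : ℕ) := finite_tor (ModuleCat.of R M) (ModuleCat.of R (R ⧸ maximalIdeal R)) i
  have hlen (i : ℕ) := length_ne_top_of_maximalIdeal_smul_eq_bot
    (maximalIdeal_smul_tor_residueField_eq_bot (ModuleCat.of R M) i)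
  obtain ⟨w, h⟩ := tor_smulShortComplex_shortExact (N := ModuleCat.of R (R ⧸ maximalIdeal R))
    (smul_residueField_eq_zero hx) (ModuleCat.of R M) hreg n
  simp only [betti_eq_toNat_length]
  rw [← ENat.toNat_add (hlen _) (hlen _)]
  congr 1
  exact Module.length_eq_add_of_exact _ _ h.moduleCat_injective_f h.moduleCat_surjective_g
    ((ShortComplex.ShortExact.moduleCat_exact_iff_function_exact _).1 h.exact)

theorem exists_betti_eq_mul_of_maximalIdeal_smul_eq_bot [Nontrivial M] [Module.Finite R M]
    (hM : maximalIdeal R • (⊤ : Submodule R M) = ⊥) :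
    ∃ d : ℕ, d ≠ 0 ∧ ∀ n, betti R M n = d * betti R (R ⧸ maximalIdeal R) n := by
  obtain ⟨d, hd, ⟨e⟩⟩ := exists_linearEquiv_pi_of_maximalIdeal_smul_eq_bot hM
  exact ⟨d, hd, fun n ↦ by rw [betti_congr e, betti_pi]⟩

end Betti
section Growth

open Asymptotics Filter

variable {f g h : ℕ → ℝ}

lemma isBigO_comp_succ_iff :
    (fun n ↦ f (n + 1)) =O[atTop] (fun n ↦ h (n + 1)) ↔ f =O[atTop] h := by
  conv_rhs => rw [← map_add_atTop_eq_nat 1, isBigO_map]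
  rfl

lemma isBigO_iff_of_succ_eq_add (hf : ∀ n, 0 ≤ f n) (hfg : ∀ n, g (n + 1) = f (n + 1) + f n)
    (hh : h =O[atTop] fun n ↦ h (n + 1)) : f =O[atTop] h ↔ g =O[atTop] h := by
  constructor
  · intro hfh
    rw [← isBigO_comp_succ_iff]
    simp only [hfg]
    exact (isBigO_comp_succ_iff.2 hfh).add (hfh.trans hh)
  · intro hgh
    refine isBigO_comp_succ_iff.1 (.trans (.of_norm_le fun n ↦ ?_) (isBigO_comp_succ_iff.2 hgh))
    rw [Real.norm_of_nonneg (hf _), hfg]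
    exact le_add_of_nonneg_right (hf n)

lemma isBigO_pow_succ {a : ℝ} (ha : a ≠ 0) : (a ^ ·) =O[atTop] fun n : ℕ ↦ a ^ (n + 1) := by
  simp only [pow_succ']
  exact isBigO_self_const_mul ha _ _

lemma isBigO_natCast_rpow_succ (p : ℝ) :
    (fun n : ℕ ↦ (n : ℝ) ^ p) =O[atTop] fun n : ℕ ↦ ((n + 1 : ℕ) : ℝ) ^ p := by
  have hequiv : (fun n : ℕ ↦ ((n + 1 : ℕ) : ℝ)) ~[atTop] fun n : ℕ ↦ (n : ℝ) := by
    simp only [Nat.cast_succ]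
    exact IsEquivalent.refl.add_const_of_norm_tendsto_atTop
      (tendsto_norm_atTop_atTop.comp tendsto_natCast_atTop_atTop)
  exact (hequiv.isTheta.symm.rpow (.of_forall fun n ↦ n.cast_nonneg)
    (.of_forall fun n ↦ (n + 1).cast_nonneg) (r := p)).1

lemma sInf_le_sInf_of_forall_lt_mem {A B : Set ℝ} (hA : A.Nonempty) (hB : BddBelow B)
    (hAB : ∀ a ∈ A, ∀ b, a < b → b ∈ B) : sInf B ≤ sInf A :=
  le_csInf hA fun a ha ↦ le_of_forall_gt_imp_ge_of_dense fun b hb ↦ csInf_le hB (hAB a ha b hb)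

lemma sInf_eq_sInf_of_forall_lt_mem {A B : Set ℝ} (hA : BddBelow A) (hB : BddBelow B)
    (hAB : ∀ a ∈ A, ∀ b, a < b → b ∈ B) (hBA : ∀ b ∈ B, ∀ a, b < a → a ∈ A) :
    sInf A = sInf B := by
  rcases A.eq_empty_or_nonempty with rfl | ⟨a, ha⟩
  · rw [Set.eq_empty_of_forall_notMem fun b hb ↦ hBA b hb (b + 1) (lt_add_one b)]
  · have hBne : B.Nonempty := ⟨a + 1, hAB a ha _ (lt_add_one a)⟩
    exact le_antisymm (sInf_le_sInf_of_forall_lt_mem hBne hA hBA)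
      (sInf_le_sInf_of_forall_lt_mem ⟨a, ha⟩ hB hAB)

lemma isBigO_pow_of_eventually_rpow_inv_le (hf : ∀ n, 0 ≤ f n) {a : ℝ}
    (hfa : ∀ᶠ n in atTop, f n ^ (n : ℝ)⁻¹ ≤ a) : f =O[atTop] (a ^ ·) := by
  refine .of_bound' ?_
  filter_upwards [hfa, eventually_ne_atTop 0] with n hn hn0
  calc ‖f n‖ = (f n ^ (n : ℝ)⁻¹) ^ n := by
        rw [Real.rpow_inv_natCast_pow (hf n) hn0, Real.norm_of_nonneg (hf n)]
    _ ≤ a ^ n := pow_le_pow_left₀ (Real.rpow_nonneg (hf n) _) hn n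
    _ ≤ ‖a ^ n‖ := le_abs_self _

lemma eventually_rpow_inv_le_of_isBigO_pow (hf : ∀ n, 0 ≤ f n) {a b : ℝ} (ha : 0 < a)
    (hab : a < b) (hfa : f =O[atTop] (a ^ ·)) : ∀ᶠ n in atTop, f n ^ (n : ℝ)⁻¹ ≤ b := by
  obtain ⟨c, hc, hbound⟩ := hfa.exists_pos
  have hroot : Tendsto (fun n : ℕ ↦ c ^ (n : ℝ)⁻¹ * a) atTop (nhds a) := by
    simpa using (tendsto_const_nhds.rpow (tendsto_inv_atTop_nhds_zero_nat (𝕜 := ℝ))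
      (.inl hc.ne')).mul_const a
  filter_upwards [hbound.bound, hroot.eventually_le_const hab, eventually_ne_atTop 0]
    with n hn hle hn0
  calc f n ^ (n : ℝ)⁻¹ ≤ (c * a ^ n) ^ (n : ℝ)⁻¹ := by
        rw [Real.norm_of_nonneg (hf n), Real.norm_of_nonneg (pow_nonneg ha.le n)] at hn
        exact Real.rpow_le_rpow (hf n) hn (by positivity)
    _ = c ^ (n : ℝ)⁻¹ * a := by
        rw [Real.mul_rpow hc.le (by positivity), Real.pow_rpow_inv_natCast ha.le hn0]
    _ ≤ b := hle

theorem limsup_rpow_inv_eq_sInf (hf : ∀ n, 0 ≤ f n) :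
    limsup (fun n ↦ f n ^ (n : ℝ)⁻¹) atTop = sInf {a | 0 < a ∧ f =O[atTop] (a ^ ·)} := by
  have hnonneg (a : ℝ) (ha : ∀ᶠ n in atTop, f n ^ (n : ℝ)⁻¹ ≤ a) : 0 ≤ a :=
    let ⟨n, hn⟩ := ha.exists
    (Real.rpow_nonneg (hf n) _).trans hn
  rw [limsup_eq]
  refine sInf_eq_sInf_of_forall_lt_mem ⟨0, hnonneg⟩ ⟨0, fun a ha ↦ ha.1.le⟩ ?_ ?_
  · intro a ha b hab
    exact ⟨(hnonneg a ha).trans_lt hab,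
      isBigO_pow_of_eventually_rpow_inv_le hf (ha.mono fun n hn ↦ hn.trans hab.le)⟩
  · rintro b ⟨hb, hfb⟩ a hba
    exact eventually_rpow_inv_le_of_isBigO_pow hf hb hba hfb

lemma isBigO_natCast_rpow_iff (hf : ∀ n, 0 ≤ f n) (p : ℝ) :
    f =O[atTop] (fun n : ℕ ↦ (n : ℝ) ^ p) ↔
      ∃ α : ℝ, 0 < α ∧ ∃ N : ℕ, ∀ n, N ≤ n → f n ≤ α * (n : ℝ) ^ p := by
  have hnorm (n : ℕ) : ‖(n : ℝ) ^ p‖ = (n : ℝ) ^ p := Real.norm_of_nonneg (by positivity)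
  simp only [isBigO_iff', eventually_atTop, hnorm, Real.norm_of_nonneg (hf _)]

end Growth

section MaximalGrowth

open Asymptotics Filter

variable (R : Type) [CommRing R] [IsLocalRing R] (M : Type) [AddCommGroup M] [Module R M]

/-- The curvature of `M`, i.e. the exponential growth rate of its Betti numbers. -/
noncomputable def curvature : ℝ :=
  limsup (fun n ↦ (betti R M n : ℝ) ^ (n : ℝ)⁻¹) atTop

/-- `M` has complexity at most `b`: its Betti numbers are eventually bounded by a multiple of
`n ^ (b - 1)`. The exponent is real, so that `b = 0`
forces the Betti numbers to vanish eventually. -/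
def ComplexityLE (b : ℕ) : Prop :=
  ∃ α : ℝ, 0 < α ∧ ∃ N : ℕ, ∀ n, N ≤ n → (betti R M n : ℝ) ≤ α * (n : ℝ) ^ ((b : ℝ) - 1)

lemma curvature_eq_sInf :
    curvature R M = sInf {a | 0 < a ∧ (fun n ↦ (betti R M n : ℝ)) =O[atTop] (a ^ ·)} :=
  limsup_rpow_inv_eq_sInf fun _ ↦ Nat.cast_nonneg _

lemma complexityLE_iff_isBigO (b : ℕ) :
    ComplexityLE R M b ↔
      (fun n ↦ (betti R M n : ℝ)) =O[atTop] fun n : ℕ ↦ (n : ℝ) ^ ((b : ℝ) - 1) :=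
  (isBigO_natCast_rpow_iff (fun _ ↦ Nat.cast_nonneg _) _).symm

variable {R M} [Module.Finite R M] {h : ℕ → ℝ}

lemma isBigO_betti_iff_residueField_of_maximalIdeal_smul_eq_bot [Nontrivial M]
    (hM : maximalIdeal R • (⊤ : Submodule R M) = ⊥) :
    (fun n ↦ (betti R M n : ℝ)) =O[atTop] h ↔
      (fun n ↦ (betti R (R ⧸ maximalIdeal R) n : ℝ)) =O[atTop] h := by
  obtain ⟨d, hd, hbetti⟩ := exists_betti_eq_mul_of_maximalIdeal_smul_eq_bot hM
  simp only [hbetti, Nat.cast_mul]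
  exact isBigO_const_mul_left_iff (Nat.cast_ne_zero.2 hd)

variable [IsNoetherianRing R]

lemma isBigO_betti_quotSMulTop_iff {x : R} (hx : x ∈ maximalIdeal R) (hreg : IsSMulRegular M x)
    (hh : h =O[atTop] fun n ↦ h (n + 1)) :
    (fun n ↦ (betti R M n : ℝ)) =O[atTop] h ↔
      (fun n ↦ (betti R (QuotSMulTop x M) n : ℝ)) =O[atTop] h :=
  isBigO_iff_of_succ_eq_add (fun _ ↦ Nat.cast_nonneg _)
    (fun n ↦ mod_cast betti_quotSMulTop_succ hx hreg n) hh

theorem isBigO_betti_quotient_ofList_smul_iff {rs : List R} (hrs : ∀ x ∈ rs, x ∈ maximalIdeal R)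
    (hreg : RingTheory.Sequence.IsWeaklyRegular M rs) (hh : h =O[atTop] fun n ↦ h (n + 1)) :
    (fun n ↦ (betti R M n : ℝ)) =O[atTop] h ↔
      (fun n ↦ (betti R (M ⧸ Ideal.ofList rs • (⊤ : Submodule R M)) n : ℝ)) =O[atTop] h := by
  induction rs generalizing M with
  | nil =>
    rw [betti_congr (Submodule.quotEquivOfEqBot (Ideal.ofList ([] : List R) • ⊤)
      (by rw [Ideal.ofList_nil, Submodule.bot_smul])).symm]
  | cons x rs ih =>
    rw [RingTheory.Sequence.isWeaklyRegular_cons_iff] at hreg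
    rw [List.forall_mem_cons] at hrs
    rw [betti_congr (Submodule.quotOfListConsSMulTopEquivQuotSMulTopInner M x rs),
      isBigO_betti_quotSMulTop_iff hrs.1 hreg.1 hh, ih hrs.2 hreg.2]

theorem isBigO_betti_iff_residueField {rs : List R} (hrs : ∀ x ∈ rs, x ∈ maximalIdeal R)
    (hreg : RingTheory.Sequence.IsRegular M rs)
    (hM : maximalIdeal R • (⊤ : Submodule R M) = Ideal.ofList rs • ⊤)
    (hh : h =O[atTop] fun n ↦ h (n + 1)) :
    (fun n ↦ (betti R M n : ℝ)) =O[atTop] h ↔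
      (fun n ↦ (betti R (R ⧸ maximalIdeal R) n : ℝ)) =O[atTop] h := by
  have : Nontrivial (M ⧸ Ideal.ofList rs • (⊤ : Submodule R M)) :=
    Submodule.Quotient.nontrivial_iff.2 hreg.top_ne_smul.symm
  rw [isBigO_betti_quotient_ofList_smul_iff hrs hreg.toIsWeaklyRegular hh,
    isBigO_betti_iff_residueField_of_maximalIdeal_smul_eq_bot
      (smul_top_quotient_eq_bot hM.le)]

end MaximalGrowth

theorem statement11_general (R : Type) [CommRing R] [IsNoetherianRing R] [IsLocalRing R]
    (M : Type) [AddCommGroup M] [Module R M] [Module.Finite R M] {rs : List R}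
    (hrs : ∀ x ∈ rs, x ∈ maximalIdeal R) (hreg : RingTheory.Sequence.IsRegular M rs)
    (hM : maximalIdeal R • (⊤ : Submodule R M) = Ideal.ofList rs • ⊤) :
    curvature R M = curvature R (R ⧸ maximalIdeal R) ∧
      ∀ b, ComplexityLE R M b ↔ ComplexityLE R (R ⧸ maximalIdeal R) b := by
  constructor
  · simp only [curvature_eq_sInf]
    congr! 3 with a
    refine and_congr_right fun ha ↦ ?_
    exact isBigO_betti_iff_residueField hrs hreg hM (isBigO_pow_succ ha.ne')
  · intro b
    simp only [complexityLE_iff_isBigO]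
    exact isBigO_betti_iff_residueField hrs hreg hM (isBigO_natCast_rpow_succ _)

theorem statement11 (R : Type) [CommRing R] [IsNoetherianRing R] [IsLocalRing R]
    (hCM : (depth R R : WithBot ℕ∞) = ringKrullDim R)
    (M : Type) [AddCommGroup M] [Module R M] [Module.Finite R M]
    (s : ℕ) (hM : IsUlrich R M s) :
    Filter.limsup (fun n : ℕ => (betti R M n : ℝ) ^ ((n : ℝ)⁻¹)) Filter.atTop =
      Filter.limsup (fun n : ℕ =>
        (betti R (R ⧸ maximalIdeal R) n : ℝ) ^ ((n : ℝ)⁻¹)) Filter.atTop ∧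
    ∀ b : ℕ,
      ((∃ α : ℝ, 0 < α ∧ ∃ N : ℕ, ∀ n : ℕ, N ≤ n →
          (betti R M n : ℝ) ≤ α * (n : ℝ) ^ ((b : ℝ) - 1)) ↔
       (∃ α : ℝ, 0 < α ∧ ∃ N : ℕ, ∀ n : ℕ, N ≤ n →
          (betti R (R ⧸ maximalIdeal R) n : ℝ) ≤ α * (n : ℝ) ^ ((b : ℝ) - 1))) := by
  obtain ⟨-, -, -, rs, -, hrs, hreg, hM⟩ := hM
  exact statement11_general R M hrs hreg hM
end
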